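/- Let G be a finite group and p a prime divisor of |G| such that gcd(|G|, (p−1)(p²−1)⋯(pⁿ−1)) = 1 for some integer n ≥ 1. Suppose G has a Sylow p-subgroup P such that every n-maximal subgroup of P (if any exists) either has a p-nilpotent supplement in G or is 𝔘ₛ-quasinormal in G. Then G is p-nilpotent. -/

import Mathlib

open scoped Pointwise

universe u

/-- `M` is a maximal subgroup of `K` (within the subgroup lattice of the ambient group). -/
def IsMaximalIn {G : Type*} [Group G] (M K : Subgroup G) : Prop :=
  M < K ∧ ∀ L : Subgroup G, M < L → L ≤ K → L = K

/-- `P` is a Sylow `p`-subgroup of the subgroup `E`. -/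
def IsSylowIn {G : Type*} [Group G] (p : ℕ) (P E : Subgroup G) : Prop :=
  P ≤ E ∧ IsPGroup p P ∧ ¬ p ∣ (P.subgroupOf E).index

/-- `H` is s-permutable in `G`: it permutes with every Sylow subgroup of `G`. -/
def SPermutable {G : Type*} [Group G] (H : Subgroup G) : Prop :=
  ∀ q : ℕ, q.Prime → ∀ Q : Subgroup G, IsSylowIn q Q ⊤ →
    (H : Set G) * (Q : Set G) = (Q : Set G) * (H : Set G)

/-- `A/B` is a chief factor of the ambient group. -/
def IsChiefFactor {G : Type*} [Group G] (A B : Subgroup G) : Prop :=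
  A.Normal ∧ B.Normal ∧ B < A ∧ ∀ L : Subgroup G, L.Normal → B < L → L < A → False

/-- The 𝔘-hypercenter: the product of all normal subgroups `N` such that every chief
factor `A/B` with `A ≤ N` has prime order. -/
def UHypercenter (G : Type*) [Group G] : Subgroup G :=
  sSup {N : Subgroup G | N.Normal ∧
    ∀ A B : Subgroup G, IsChiefFactor A B → A ≤ N → (B.relIndex A).Prime}

/-- The 𝔖-hypercenter: the product of all normal subgroups `N` such that every chief
factor `A/B` with `A ≤ N` is abelian with `G/C_G(A/B)` soluble. -/
def SHypercenter (G : Type*) [Group G] : Subgroup G :=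
  sSup {N : Subgroup G | N.Normal ∧
    ∀ A B : Subgroup G, IsChiefFactor A B → A ≤ N →
      (∀ a ∈ A, ∀ b ∈ A, a * b * a⁻¹ * b⁻¹ ∈ B) ∧
      ∃ C : Subgroup G, ∃ _ : C.Normal,
        (∀ g : G, g ∈ C ↔ ∀ h ∈ A, g * h * g⁻¹ * h⁻¹ ∈ B) ∧ IsSolvable (G ⧸ C)}

/-- `H` is 𝔘ₛ-quasinormal in `G`. -/
def UsQuasinormal {G : Type*} [Group G] (H : Subgroup G) : Prop :=
  ∃ T : Subgroup G, T.Normal ∧ SPermutable (H ⊔ T) ∧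
    ∀ x ∈ H ⊓ T,
      (QuotientGroup.mk x : G ⧸ H.normalCore) ∈ UHypercenter (G ⧸ H.normalCore)

/-- `H` is 𝔖ₛ-quasinormal in `G`. -/
def SsQuasinormal {G : Type*} [Group G] (H : Subgroup G) : Prop :=
  ∃ T : Subgroup G, T.Normal ∧ SPermutable (H ⊔ T) ∧
    ∀ x ∈ H ⊓ T,
      (QuotientGroup.mk x : G ⧸ H.normalCore) ∈ SHypercenter (G ⧸ H.normalCore)

/-- A group is supersoluble if it has a chain of subgroups, each normal in the whole
group, reaching from `⊥` to `⊤`, with all successive factors cyclic. -/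
def IsSupersoluble (G : Type*) [Group G] : Prop :=
  ∃ (k : ℕ) (c : Fin (k + 1) → Subgroup G),
    c 0 = ⊥ ∧ c (Fin.last k) = ⊤ ∧ (∀ i, (c i).Normal) ∧
    (∀ i : Fin k, c i.castSucc ≤ c i.succ) ∧
    ∀ i : Fin k, ∃ g ∈ c i.succ, ∀ x ∈ c i.succ, ∃ m : ℤ, x⁻¹ * g ^ m ∈ c i.castSucc

/-- `A` is subnormal in `G`. -/
def IsSubnormal {G : Type*} [Group G] (A : Subgroup G) : Prop :=
  ∃ (n : ℕ) (c : Fin (n + 1) → Subgroup G), c 0 = A ∧ c (Fin.last n) = ⊤ ∧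
    ∀ i : Fin n, c i.castSucc ≤ c i.succ ∧
      ∀ x ∈ c i.succ, ∀ a ∈ c i.castSucc, x * a * x⁻¹ ∈ c i.castSucc

/-- `H` has a supersoluble supplement in the ambient group. -/
def HasSupersolubleSupplement {G : Type*} [Group G] (H : Subgroup G) : Prop :=
  ∃ T : Subgroup G, IsSupersoluble T ∧ (H : Set G) * (T : Set G) = Set.univ

/-- A group is `p`-nilpotent if it has a normal subgroup of order prime to `p`
and of `p`-power index (a normal `p`-complement). -/
def IsPNilpotent (p : ℕ) (G : Type*) [Group G] : Prop :=
  ∃ N : Subgroup G, N.Normal ∧ Nat.Coprime (Nat.card N) p ∧ ∃ k : ℕ, N.index = p ^ k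

/-- `H` has a `p`-nilpotent supplement in the ambient group. -/
def HasPNilpotentSupplement {G : Type*} [Group G] (p : ℕ) (H : Subgroup G) : Prop :=
  ∃ T : Subgroup G, IsPNilpotent p T ∧ (H : Set G) * (T : Set G) = Set.univ

/-- `H` is an `n`-maximal subgroup of `P`: there is a chain
`H = Hₙ < ⋯ < H₁ < H₀ = P` with each term maximal in the preceding one. -/
def IsNMaximalIn {G : Type*} [Group G] (n : ℕ) (H P : Subgroup G) : Prop :=
  ∃ c : Fin (n + 1) → Subgroup G, c 0 = P ∧ c (Fin.last n) = H ∧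
    ∀ i : Fin n, IsMaximalIn (c i.succ) (c i.castSucc)

/-- A group is quasinilpotent if every element induces an inner automorphism
on every chief factor. -/
def IsQuasinilpotentGroup (G : Type*) [Group G] : Prop :=
  ∀ A B : Subgroup G, IsChiefFactor A B →
    ∀ x : G, ∃ y ∈ A, ∀ h ∈ A, (x * h * x⁻¹) * (y * h * y⁻¹)⁻¹ ∈ B

/-- The generalized Fitting subgroup: the product of all normal quasinilpotent
subgroups. -/
def generalizedFitting (G : Type*) [Group G] : Subgroup G :=
  sSup {N : Subgroup G | N.Normal ∧ IsQuasinilpotentGroup N}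

/-- The generalized Fitting subgroup of a subgroup `H`, as a subgroup of `G`. -/
def FStarIn {G : Type*} [Group G] (H : Subgroup G) : Subgroup G :=
  (generalizedFitting H).map H.subtype

/-- The Fitting subgroup: the product of all nilpotent normal subgroups. -/
def fittingSubgroup (G : Type*) [Group G] : Subgroup G :=
  sSup {N : Subgroup G | N.Normal ∧ Group.IsNilpotent N}

/-- The Fitting subgroup of a subgroup `H`, as a subgroup of `G`. -/
def FittingIn {G : Type*} [Group G] (H : Subgroup G) : Subgroup G :=
  (fittingSubgroup H).map H.subtype

/-!
Suppose `G` is not `p`-nilpotent, let `P` be a Sylow `p`-subgroup and `R` the `p`-residual. If `K`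
is a complement of `P ∩ R` in `R`, then the elements of `P` normalising `K` fix it as a transversal,
so the transfer attached to the conjugation action of `P` on `R` kills them. This transfer is onto
`(P ∩ R) / [P ∩ R, P]` already on `P ∩ R`, because `R` has no nontrivial `p`-quotient. Hence some
maximal subgroup `M` of `P` does not contain `P ∩ R` but contains every element of `P` normalising
such a `K`, and no subgroup of `M` has a `p`-nilpotent supplement: all subgroups of index
`p ^ n` in `P` that lie in `M` are 𝔘ₛ-quasinormal.

By Frobenius' criterion the coprimality hypothesis forces `p`-nilpotency as soon as a Sylow
`p`-subgroup has order at most `p ^ n`. In a minimal counterexample `O_{p'}(G) = 1`.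
If `O_p(G) ≠ 1`, a minimal normal `p`-subgroup `L` contains `P ∩ R`, has order greater than `p ^ n`
and lies in every nontrivial normal subgroup; the 𝔘ₛ-quasinormal subgroups of `M` meeting `L` are
then s-permutable, which makes `M ∩ L` normal and puts `P ∩ R` inside `M`.
If `O_p(G) = 1`, an 𝔘ₛ-quasinormal `H ≤ M` of index `p ^ n` yields a nontrivial normal `T` with
`H ∩ T = 1`; its Sylow `p`-subgroups have order at most `p ^ n`, so `T` is `p`-nilpotent, which is
impossible when `O_p(G) = O_{p'}(G) = 1`.
-/

open scoped commutatorElement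

theorem relIndex_sup_eq_of_normal_right {G : Type*} [Group G] [Finite G]
    (K N : Subgroup G) [N.Normal] :
    K.relIndex (K ⊔ N) = K.relIndex N := by
  have hleft := Subgroup.relIndex_mul_relIndex (K ⊓ N) K (K ⊔ N) inf_le_left le_sup_left
  have hright := Subgroup.relIndex_mul_relIndex (K ⊓ N) N (K ⊔ N) inf_le_right le_sup_right
  rw [Subgroup.inf_relIndex_left] at hleft
  rw [Subgroup.inf_relIndex_right, Subgroup.relIndex_sup_right, mul_comm] at hright
  exact Nat.eq_of_mul_eq_mul_left (Nat.pos_of_ne_zero Subgroup.index_ne_zero_of_finite)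
    (hleft.trans hright.symm)

section PResidual

variable {p : ℕ} {G H : Type*} [Group G] [Group H]

/-- `g` is a `q`-element for some prime `q ≠ p`; such elements generate the `p`-residual. -/
def IsPrimaryRegular (p : ℕ) (g : G) : Prop :=
  ∃ q k : ℕ, q.Prime ∧ q ≠ p ∧ g ^ q ^ k = 1

/-- The `p`-residual `O^p(G)`, the smallest normal subgroup whose quotient is a `p`-group, encoded
as the subgroup generated by the `q`-elements with `q ≠ p`. -/
def pResidual (p : ℕ) (G : Type*) [Group G] : Subgroup G :=
  Subgroup.closure {g | IsPrimaryRegular p g}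

theorem IsPrimaryRegular.map {g : G} (hg : IsPrimaryRegular p g) (f : G →* H) :
    IsPrimaryRegular p (f g) := by
  obtain ⟨q, k, hq, hqp, h⟩ := hg
  exact ⟨q, k, hq, hqp, by rw [← map_pow, h, map_one]⟩

theorem IsPrimaryRegular.of_map_injective {f : G →* H} (hf : Function.Injective f) {g : G}
    (hg : IsPrimaryRegular p (f g)) : IsPrimaryRegular p g := by
  obtain ⟨q, k, hq, hqp, h⟩ := hg
  exact ⟨q, k, hq, hqp, hf (by rw [map_pow, h, map_one])⟩

theorem IsPrimaryRegular.mem_pResidual {g : G} (hg : IsPrimaryRegular p g) : g ∈ pResidual p G :=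
  Subgroup.subset_closure hg

theorem pResidual_le_iff {K : Subgroup G} :
    pResidual p G ≤ K ↔ ∀ g, IsPrimaryRegular p g → g ∈ K :=
  Subgroup.closure_le K

theorem pResidual_map_le (f : G →* H) : (pResidual p G).map f ≤ pResidual p H :=
  Subgroup.map_le_iff_le_comap.2 <| pResidual_le_iff.2 fun _ hg ↦ (hg.map f).mem_pResidual

instance pResidual_characteristic : (pResidual p G).Characteristic :=
  Subgroup.characteristic_iff_map_le.2 fun _ ↦ pResidual_map_le _

theorem IsPrimaryRegular.of_mem_isPGroup {q : ℕ} (hq : q.Prime) (hqp : q ≠ p) {Q : Subgroup G}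
    (hQ : IsPGroup q Q) {g : G} (hg : g ∈ Q) : IsPrimaryRegular p g := by
  obtain ⟨k, hk⟩ := hQ ⟨g, hg⟩
  exact ⟨q, k, hq, hqp, congrArg Subtype.val hk⟩

theorem isPGroup_quotient_pResidual [Finite G] : IsPGroup p (G ⧸ pResidual p G) := by
  refine IsPGroup.of_card (Nat.eq_prime_pow_of_unique_prime_dvd
    Nat.card_pos.ne' fun {q} hq hdvd ↦ ?_)
  by_contra hqp
  have := Fact.mk hq
  obtain ⟨Q⟩ : Nonempty (Sylow q G) := inferInstance
  have hQ : (Q : Subgroup G) ≤ pResidual p G := fun g hg ↦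
    (IsPrimaryRegular.of_mem_isPGroup hq hqp Q.isPGroup' hg).mem_pResidual
  exact Q.not_dvd_index (hdvd.trans (Subgroup.index_dvd_of_le hQ))

theorem le_pResidual_of_coprime [Finite G] {K : Subgroup G} (hK : p.Coprime (Nat.card K)) :
    K ≤ pResidual p G := fun g hg ↦ by
  have hpow : (g : G ⧸ pResidual p G) ^ Nat.card K = 1 := by
    rw [← QuotientGroup.mk_pow, QuotientGroup.eq_one_iff,
      show g ^ Nat.card K = 1 from congrArg Subtype.val (pow_card_eq_one' (x := (⟨g, hg⟩ : K)))]
    exact one_mem _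
  exact (QuotientGroup.eq_one_iff g).1
    ((isPGroup_quotient_pResidual.powEquiv hK).injective (hpow.trans (one_pow _).symm))

variable [hp : Fact p.Prime]

theorem IsPrimaryRegular.eq_one_of_isPGroup (hG : IsPGroup p G) {g : G}
    (hg : IsPrimaryRegular p g) : g = 1 := by
  obtain ⟨q, k, hq, hqp, h⟩ := hg
  have hcop : p.Coprime (q ^ k) := ((Nat.coprime_primes hp.out hq).2 hqp.symm).pow_right k
  exact (hG.powEquiv hcop).injective (h.trans (one_pow _).symm)

theorem pResidual_le_of_isPGroup_quotient {N : Subgroup G} [N.Normal] (hN : IsPGroup p (G ⧸ N)) :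
    pResidual p G ≤ N :=
  pResidual_le_iff.2 fun g hg ↦
    (QuotientGroup.eq_one_iff g).1 ((hg.map (QuotientGroup.mk' N)).eq_one_of_isPGroup hN)

theorem pResidual_hom_eq_one (hH : IsPGroup p H) (f : pResidual p G →* H) : f = 1 :=
  MonoidHom.eq_of_eqOn_dense Subgroup.closure_closure_coe_preimage fun _ hg ↦
    (IsPrimaryRegular.map (.of_map_injective (pResidual p G).subtype_injective hg)
      f).eq_one_of_isPGroup hH

variable [Finite G]

theorem isPNilpotent_iff_coprime_card_pResidual :
    IsPNilpotent p G ↔ p.Coprime (Nat.card (pResidual p G)) := by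
  constructor
  · rintro ⟨N, hN, hcop, k, hk⟩
    exact hcop.symm.coprime_dvd_right (Subgroup.card_dvd_of_le
      (pResidual_le_of_isPGroup_quotient (.of_card ((N.index_eq_card).symm.trans hk))))
  · intro h
    exact ⟨pResidual p G, inferInstance, h.symm, IsPGroup.iff_card.1 isPGroup_quotient_pResidual⟩

theorem sylow_sup_pResidual (P : Sylow p G) : (P : Subgroup G) ⊔ pResidual p G = ⊤ := by
  obtain ⟨k, hk⟩ := IsPGroup.iff_card.1 (isPGroup_quotient_pResidual (p := p) (G := G))
  have hcop : (P : Subgroup G).index.Coprime (pResidual p G).index := by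
    rw [Subgroup.index_eq_card (pResidual p G), hk]
    exact (hp.out.coprime_iff_not_dvd.2 P.not_dvd_index).symm.pow_right k
  exact Subgroup.index_eq_one.1 <| Nat.eq_one_of_dvd_coprimes hcop
    (Subgroup.index_dvd_of_le le_sup_left) (Subgroup.index_dvd_of_le le_sup_right)

theorem sylow_not_dvd_relIndex_normal (P : Sylow p G) (N : Subgroup G) [N.Normal] :
    ¬ p ∣ (P : Subgroup G).relIndex N := fun hdvd ↦
  P.not_dvd_index <| hdvd.trans <| relIndex_sup_eq_of_normal_right (P : Subgroup G) N ▸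
    Subgroup.relIndex_dvd_index_of_le le_sup_left

theorem coprime_card_of_sylow_inf_eq_bot (P : Sylow p G) {N : Subgroup G} [N.Normal]
    (h : (P : Subgroup G) ⊓ N = ⊥) : p.Coprime (Nat.card N) := by
  rw [hp.out.coprime_iff_not_dvd, ← Subgroup.relIndex_bot_left, ← h, Subgroup.inf_relIndex_right]
  exact sylow_not_dvd_relIndex_normal P N

theorem isPNilpotent_of_sylow_inf_pResidual_eq_bot (P : Sylow p G)
    (h : (P : Subgroup G) ⊓ pResidual p G = ⊥) : IsPNilpotent p G :=
  isPNilpotent_iff_coprime_card_pResidual.2 (coprime_card_of_sylow_inf_eq_bot P h)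

end PResidual

section Transfer

variable {F O A : Type*} [Group F] [Group O] [CommGroup A] [MulDistribMulAction F O]
  {R : Subgroup O} [R.FiniteIndex] [MulAction.QuotientAction F R] {φ : R →* A}
  (hφ : ∀ (f : F) (x y : R), (y : O) = f • (x : O) → φ y = φ x)

open Subgroup.leftTransversals

include hφ in
theorem smul_diff_smul_of_invariant (f : F) (S T : R.LeftTransversal) :
    diff φ (f • S) (f • T) = diff φ S T := by
  let _ := R.fintypeQuotientOfFiniteIndex
  refine Fintype.prod_equiv (MulAction.toPerm f).symm _ _ fun q ↦ hφ f _ _ ?_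
  simp only [Subgroup.smul_apply_eq_smul_apply_inv_smul, MulAction.toPerm_symm_apply, smul_mul',
    smul_inv']

/-- For a group `F` acting on `O` and fixing `φ : R →* A`, the homomorphism sending `f` to the
difference of the transversals `S` and `f • S` of `R`; it does not depend on `S`. -/
noncomputable def actionTransfer : F →* A :=
  MonoidHom.mk' (fun f ↦ diff φ default (f • default)) fun f g ↦ by
    rw [mul_smul, ← diff_mul_diff, smul_diff_smul_of_invariant hφ]

theorem actionTransfer_eq_diff (S : R.LeftTransversal) (f : F) :
    actionTransfer hφ f = diff φ S (f • S) := by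
  change diff φ default (f • default) = _
  rw [← diff_mul_diff φ default S, ← diff_mul_diff φ S (f • S), smul_diff_smul_of_invariant hφ,
    mul_left_comm, diff_mul_diff, diff_self, mul_one]

theorem actionTransfer_eq_one_of_smul_eq {S : R.LeftTransversal} {f : F}
    (hf : f • S = S) : actionTransfer hφ f = 1 := by
  rw [actionTransfer_eq_diff hφ S, hf, diff_self]

theorem actionTransfer_eq_of_conj {f : F} {r : R}
    (hf : ∀ x : O, f • x = r * x * (r : O)⁻¹) :
    actionTransfer hφ f = MonoidHom.transfer φ r * (φ r ^ R.index)⁻¹ := by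
  have hquot (q : O ⧸ R) : f⁻¹ • q = (r : O)⁻¹ • q := by
    induction q using QuotientGroup.induction_on with | H x =>
    have hx : f⁻¹ • x = (r : O)⁻¹ * x * r := by
      rw [inv_smul_eq_iff, hf]
      group
    change ((f⁻¹ • x : O) : O ⧸ R) = (((r : O)⁻¹ * x : O) : O ⧸ R)
    rw [hx, QuotientGroup.mk_mul_of_mem _ r.2]
  have hdiff (S : R.LeftTransversal) : diff φ ((r : O) • S) (f • S) = (φ r ^ R.index)⁻¹ := by
    let _ := R.fintypeQuotientOfFiniteIndex
    rw [Subgroup.index_eq_card, ← inv_pow, ← map_inv, Nat.card_eq_fintype_card, ← Finset.card_univ]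
    refine Finset.prod_eq_pow_card fun q _ ↦ congrArg φ (Subtype.ext ?_)
    simp only [Subgroup.smul_apply_eq_smul_apply_inv_smul, hquot, hf, smul_eq_mul,
      InvMemClass.coe_inv]
    group
  rw [actionTransfer_eq_diff hφ default, MonoidHom.transfer_def φ default, ← hdiff default,
    diff_mul_diff]

end Transfer

section Commutator

theorem eq_bot_of_le_commutator {G : Type*} [Group G] {P R : Subgroup G} [Group.IsNilpotent P]
    (hRP : R ≤ P) (hR : R ≤ ⁅R, P⁆) : R = ⊥ := by
  obtain ⟨k, hk⟩ := (Subgroup.isNilpotent_iff_lowerCentralSeries P).1 ‹_›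
  rw [eq_bot_iff, ← hk]
  clear hk
  induction k with
  | zero => exact hRP
  | succ k ih => exact hR.trans (Subgroup.commutator_mono ih le_rfl)

theorem exists_hom_conj_invariant {G : Type u} [Group G] (P N : Subgroup G) :
    ∃ (A : Type u) (_ : CommGroup A) (φ : P.subgroupOf N →* A), Function.Surjective φ ∧
      (∀ u ∈ P, ∀ x y : P.subgroupOf N, (y : G) = u * x * u⁻¹ → φ y = φ x) ∧
      ∀ x, φ x = 1 → (x : G) ∈ ⁅P ⊓ N, P⁆ := by
  let ι : P.subgroupOf N →* G := N.subtype.comp (P.subgroupOf N).subtype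
  have hcomm : commutator (P.subgroupOf N) ≤ ⁅P ⊓ N, P⁆.comap ι := by
    refine Subgroup.commutator_le.2 fun x _ y _ ↦ ?_
    rw [Subgroup.mem_comap, map_commutatorElement]
    exact Subgroup.commutator_mem_commutator ⟨x.2, x.1.2⟩ y.2
  have := Subgroup.Normal.of_commutator_le _ hcomm
  have := Subgroup.Normal.quotient_commutative_iff_commutator_le.2 hcomm
  refine ⟨_ ⧸ ⁅P ⊓ N, P⁆.comap ι, { mul_comm := this.is_comm.comm }, QuotientGroup.mk' _,
    QuotientGroup.mk'_surjective _, fun u hu x y hxy ↦ ?_, fun x ↦ (QuotientGroup.eq_one_iff x).1⟩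
  have hι : ι (y⁻¹ * x) = ⁅u, (x : G)⁻¹⁆ := by
    rw [map_mul, map_inv, show ι y = u * x * u⁻¹ from hxy, show ι x = x from rfl,
      commutatorElement_def]
    group
  refine QuotientGroup.eq.2 (Subgroup.mem_comap.2 ?_)
  rw [hι, Subgroup.commutator_comm]
  exact Subgroup.commutator_mem_commutator hu ((P ⊓ N).inv_mem ⟨x.2, x.1.2⟩)

end Commutator

section HyperfocalTransfer

theorem exists_hom_eq_transfer {G : Type u} [Group G] [Finite G] (P N : Subgroup G) [N.Normal] :
    ∃ (A : Type u) (_ : CommGroup A) (φ : P.subgroupOf N →* A) (d : P →* A),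
      Function.Surjective φ ∧ (∀ x, φ x = 1 → (x : G) ∈ ⁅P ⊓ N, P⁆) ∧
      (∀ r : P.subgroupOf N, d ⟨r, r.2⟩ =
        MonoidHom.transfer φ (r : N) * (φ r ^ P.relIndex N)⁻¹) ∧
      ∀ K : Subgroup G, Subgroup.IsComplement' (K.subgroupOf N) (P.subgroupOf N) →
        ∀ u : P, (u : G) ∈ Subgroup.normalizer (K : Set G) → d u = 1 := by
  obtain ⟨A, _, φ, hsurj, hconj, hker⟩ := exists_hom_conj_invariant P N
  let _ : MulDistribMulAction P N :=
    MulDistribMulAction.compHom N ((MulAut.conjNormal (H := N)).comp P.subtype)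
  have hsmul (u : P) (x : N) : ((u • x : N) : G) = u * x * (u : G)⁻¹ :=
    MulAut.conjNormal_apply (u : G) x
  have : MulAction.QuotientAction P (P.subgroupOf N) := ⟨fun u x y hxy ↦ by
    rw [← smul_inv', ← smul_mul', Subgroup.mem_subgroupOf, hsmul]
    exact mul_mem (mul_mem u.2 hxy) (inv_mem u.2)⟩
  have hinv (u : P) (x y : P.subgroupOf N) (hxy : (y : N) = u • (x : N)) : φ y = φ x :=
    hconj u u.2 x y ((congrArg Subtype.val hxy).trans (hsmul u x))
  refine ⟨A, _, φ, actionTransfer hinv, hsurj, hker,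
    fun r ↦ actionTransfer_eq_of_conj hinv fun x ↦ Subtype.ext (hsmul _ x), fun K hK u hu ↦ ?_⟩
  refine actionTransfer_eq_one_of_smul_eq hinv (S := ⟨K.subgroupOf N, hK⟩) (Subtype.ext ?_)
  ext x
  change x ∈ u • (K.subgroupOf N : Set N) ↔ _
  rw [Set.mem_smul_set_iff_inv_smul_mem]
  change ((u⁻¹ • x : N) : G) ∈ K ↔ (x : G) ∈ K
  rw [hsmul, Subgroup.mem_normalizer_iff.1 (inv_mem hu) x]
  rfl

variable {p : ℕ} [hp : Fact p.Prime] {G : Type*} [Group G] [Finite G]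

theorem sylow_relIndex_pResidual (P : Sylow p G) :
    (P : Subgroup G).relIndex (pResidual p G) = (P : Subgroup G).index := by
  rw [← relIndex_sup_eq_of_normal_right, sylow_sup_pResidual, Subgroup.relIndex_top_right]

theorem isComplement'_subgroupOf_pResidual (P : Sylow p G) {K : Subgroup G}
    (hK : Nat.card K = (P : Subgroup G).index) :
    Subgroup.IsComplement' (K.subgroupOf (pResidual p G))
      ((P : Subgroup G).subgroupOf (pResidual p G)) := by
  have hcop : p.Coprime (Nat.card K) := by
    rw [hK, hp.out.coprime_iff_not_dvd]
    exact P.not_dvd_index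
  have hcard : Nat.card (K.subgroupOf (pResidual p G)) = Nat.card K :=
    Nat.card_congr (Subgroup.subgroupOfEquivOfLe (le_pResidual_of_coprime hcop)).toEquiv
  refine Subgroup.isComplement'_of_coprime ?_ ?_
  · rw [hcard, hK, ← sylow_relIndex_pResidual P, Subgroup.relIndex, Subgroup.index_mul_card]
  · obtain ⟨k, hk⟩ := IsPGroup.iff_card.1 (P.isPGroup'.comap_subtype (K := pResidual p G))
    rw [hcard, show Nat.card ((P : Subgroup G).subgroupOf (pResidual p G)) = p ^ k from hk]
    exact hcop.symm.pow_right k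

theorem exists_supplement_inf_pResidual (P : Sylow p G) :
    ∃ D : Subgroup P, commutator P ≤ D ∧ (pResidual p G).subgroupOf P ⊔ D = ⊤ ∧
      (D = ⊤ → (P : Subgroup G) ⊓ pResidual p G = ⊥) ∧
      ∀ K : Subgroup G, Nat.card K = (P : Subgroup G).index →
        ∀ u : P, (u : G) ∈ Subgroup.normalizer (K : Set G) → u ∈ D := by
  obtain ⟨A, _, φ, d, hsurj, hker, hd, hK⟩ :=
    exists_hom_eq_transfer (P : Subgroup G) (pResidual p G)
  have hA : IsPGroup p A := (P.isPGroup'.comap_subtype (K := pResidual p G)).of_surjective φ hsurj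
  have hcop : p.Coprime ((P : Subgroup G).relIndex (pResidual p G)) :=
    hp.out.coprime_iff_not_dvd.2 (sylow_not_dvd_relIndex_normal P _)
  have hd' (r : (P : Subgroup G).subgroupOf (pResidual p G)) :
      d ⟨r, r.2⟩ = (hA.powEquiv hcop (φ r))⁻¹ := by
    rw [hd, pResidual_hom_eq_one hA (MonoidHom.transfer φ), MonoidHom.one_apply, one_mul]
    rfl
  refine ⟨d.ker, Abelianization.commutator_subset_ker d, ?_, fun htop ↦ ?_,
    fun K hcard ↦ hK K (isComplement'_subgroupOf_pResidual P hcard)⟩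
  · refine eq_top_iff.2 fun u _ ↦ ?_
    obtain ⟨r, hr⟩ := hsurj ((hA.powEquiv hcop).symm (d u)⁻¹)
    have hdr : d ⟨r, r.2⟩ = d u := by rw [hd', hr, Equiv.apply_symm_apply, inv_inv]
    rw [← mul_inv_cancel_left (⟨r, r.2⟩ : P) u]
    refine Subgroup.mul_mem_sup r.1.2 ?_
    rw [MonoidHom.mem_ker, map_mul, map_inv, hdr, inv_mul_cancel]
  · have := P.isPGroup'.isNilpotent
    refine eq_bot_of_le_commutator inf_le_left fun x ⟨hxP, hxO⟩ ↦ hker ⟨⟨x, hxO⟩, hxP⟩ ?_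
    have hone : (hA.powEquiv hcop (φ ⟨⟨x, hxO⟩, hxP⟩))⁻¹ = 1 := by
      rw [← hd', MonoidHom.ker_eq_top_iff.1 htop, MonoidHom.one_apply]
    exact (hA.powEquiv hcop).injective ((inv_eq_one.1 hone).trans (one_pow _).symm)

theorem exists_ge_index_eq_prime_of_isPGroup (hG : IsPGroup p G) {D : Subgroup G} (hD : D ≠ ⊤) :
    ∃ M, D ≤ M ∧ M.index = p := by
  obtain ⟨n, hn⟩ := IsPGroup.iff_card.1 hG
  obtain ⟨m, hm⟩ := IsPGroup.iff_card.1 (hG.to_subgroup D)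
  have hlt : m < n := by
    rw [← Nat.pow_lt_pow_iff_right hp.out.one_lt, ← hm, ← hn]
    exact lt_of_le_of_ne D.card_le_card_group fun h ↦ hD (D.card_eq_iff_eq_top.1 h)
  obtain ⟨M, hM, hDM⟩ := Sylow.exists_subgroup_card_pow_prime_le p (m := n - 1)
    (hn ▸ pow_dvd_pow p (n.sub_le 1)) D hm (by lia)
  refine ⟨M, hDM, Nat.eq_of_mul_eq_mul_left (pow_pos hp.out.pos (n - 1)) ?_⟩
  rw [← hM, M.card_mul_index, hM, hn, pow_sub_one_mul (by lia)]

theorem exists_maximal_of_not_isPNilpotent (P : Sylow p G) (hG : ¬ IsPNilpotent p G) :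
    ∃ M ≤ (P : Subgroup G), M.relIndex P = p ∧ (P : Subgroup G) ≤ Subgroup.normalizer (M : Set G) ∧
      ¬ (P : Subgroup G) ⊓ pResidual p G ≤ M ∧
      ∀ K : Subgroup G, Nat.card K = (P : Subgroup G).index →
        ∀ u ∈ P, u ∈ Subgroup.normalizer (K : Set G) → u ∈ M := by
  obtain ⟨D, hcomm, hsup, htop, hK⟩ := exists_supplement_inf_pResidual P
  obtain ⟨M, hDM, hM⟩ := exists_ge_index_eq_prime_of_isPGroup P.isPGroup'
    fun hD ↦ hG (isPNilpotent_of_sylow_inf_pResidual_eq_bot P (htop hD))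
  have hsub : (M.map (P : Subgroup G).subtype).subgroupOf P = M :=
    Subgroup.comap_map_eq_self_of_injective (P : Subgroup G).subtype_injective M
  have hMP := Subgroup.map_subtype_le M
  have hnormal : M.Normal := .of_commutator_le _ (hcomm.trans hDM)
  refine ⟨M.map (P : Subgroup G).subtype, hMP, ?_, ?_, fun hle ↦ ?_,
    fun K hcard u hu hnorm ↦ ⟨⟨u, hu⟩, hDM (hK K hcard ⟨u, hu⟩ hnorm), rfl⟩⟩
  · rw [Subgroup.relIndex, hsub, hM]
  · exact (Subgroup.normal_subgroupOf_iff_le_normalizer hMP).1 (hsub.symm ▸ hnormal)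
  · have hOM : (pResidual p G).subgroupOf P ≤ M := fun x hx ↦
      hsub ▸ Subgroup.mem_subgroupOf.2 (hle ⟨x.2, hx⟩)
    have hMtop : M = ⊤ := top_le_iff.1 (hsup ▸ sup_le hOM hDM)
    exact hp.out.one_lt.ne' (hM.symm.trans (Subgroup.index_eq_one.2 hMtop))

end HyperfocalTransfer

section Products

variable {G : Type*} [Group G]

theorem relIndex_eq_ncard_orbit (H K : Subgroup G) :
    K.relIndex H = (MulAction.orbit H ((1 : G) : G ⧸ K)).ncard := by
  have hstab : K.subgroupOf H = MulAction.stabilizer H ((1 : G) : G ⧸ K) := by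
    ext h
    rw [MulAction.mem_stabilizer_iff, Subgroup.mem_subgroupOf]
    change _ ↔ (((h : G) * 1 : G) : G ⧸ K) = _
    rw [mul_one, QuotientGroup.eq, mul_one, inv_mem_iff]
  rw [← MulAction.index_stabilizer, Subgroup.relIndex, hstab]

theorem relIndex_eq_of_subset_mul {H K S : Subgroup G} (hHS : H ≤ S)
    (hS : (S : Set G) ⊆ (H : Set G) * K) : K.relIndex S = K.relIndex H := by
  rw [relIndex_eq_ncard_orbit, relIndex_eq_ncard_orbit]
  congr 1
  refine (Set.range_subset_iff.2 fun s ↦ ?_).antisymm (Set.range_subset_iff.2 fun h ↦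
    ⟨⟨h, hHS h.2⟩, rfl⟩)
  obtain ⟨h, hh, k, hk, hs⟩ := hS s.2
  have hs : h * k = s := hs
  refine ⟨⟨h, hh⟩, QuotientGroup.eq.2 ?_⟩
  change (h * 1)⁻¹ * (s * 1) ∈ K
  rwa [← hs, mul_one, mul_one, inv_mul_cancel_left]

theorem coe_sup_of_mul_comm {H K : Subgroup G} (h : (H : Set G) * K = K * H) :
    ((H ⊔ K : Subgroup G) : Set G) = H * K := by
  rw [Subgroup.sup_eq_closure_mul]
  refine Set.Subset.antisymm (fun x hx ↦ ?_) Subgroup.subset_closure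
  induction hx using Subgroup.closure_induction with
  | mem _ hx => exact hx
  | one => exact ⟨1, H.one_mem, 1, K.one_mem, one_mul 1⟩
  | mul x y _ _ hx hy =>
    have hmul : (H : Set G) * K * (H * K) = H * K := by
      rw [mul_assoc, ← mul_assoc (K : Set G), ← h, mul_assoc, coe_mul_coe, ← mul_assoc, coe_mul_coe]
    exact hmul ▸ Set.mul_mem_mul hx hy
  | inv x _ hx =>
    rw [h, ← inv_coe_set (H := H), ← inv_coe_set (H := K), ← mul_inv_rev]
    exact Set.inv_mem_inv.2 hx

theorem index_dvd_card_of_mul_eq_univ {H T : Subgroup G}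
    (h : (H : Set G) * (T : Set G) = Set.univ) :
    T.index ∣ Nat.card H := by
  rw [← Subgroup.relIndex_top_right, relIndex_eq_of_subset_mul (le_top : H ≤ ⊤)
    (h ▸ Set.subset_univ _)]
  exact Subgroup.relIndex_dvd_card T H

theorem relIndex_sup_dvd_card_of_mul_comm {H K : Subgroup G} (h : (H : Set G) * K = K * H) :
    K.relIndex (H ⊔ K) ∣ Nat.card H := by
  rw [relIndex_eq_of_subset_mul le_sup_left (coe_sup_of_mul_comm h).subset]
  exact Subgroup.relIndex_dvd_card K H

end Products

section Supplement

variable {p : ℕ} [hp : Fact p.Prime] {G : Type*} [Group G] [Finite G]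

theorem sylow_index_eq_of_coprime_of_dvd (P : Sylow p G) {a b : ℕ} (ha : p.Coprime a)
    (hdvd : a ∣ Nat.card G) (hG : Nat.card G ∣ a * p ^ b) : (P : Subgroup G).index = a := by
  obtain ⟨m, hm⟩ := IsPGroup.iff_card.1 P.isPGroup'
  have hP : p.Coprime (P : Subgroup G).index := hp.out.coprime_iff_not_dvd.2 P.not_dvd_index
  refine Nat.dvd_antisymm ?_ ?_
  · exact (hP.symm.pow_right b).dvd_of_dvd_mul_right ((Subgroup.index_dvd_card _).trans hG)
  · rw [← Subgroup.card_mul_index (P : Subgroup G), hm] at hdvd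
    exact (ha.symm.pow_right m).dvd_of_dvd_mul_left hdvd

theorem card_complement_of_mul_eq_univ (P : Sylow p G) {H T : Subgroup G} {W : Subgroup T}
    (hH : IsPGroup p H) (hHT : (H : Set G) * (T : Set G) = Set.univ)
    (hW : (Nat.card W).Coprime p) {k : ℕ} (hk : W.index = p ^ k) :
    Nat.card (W.map T.subtype) = (P : Subgroup G).index := by
  obtain ⟨a, ha⟩ := IsPGroup.iff_card.1 hH
  have hcard := Subgroup.card_map_of_injective (K := W) T.subtype_injective
  refine (sylow_index_eq_of_coprime_of_dvd P (b := k + a) (hcard ▸ hW.symm)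
    (Subgroup.card_subgroup_dvd_card _) ?_).symm
  rw [hcard, ← T.card_mul_index, ← W.card_mul_index, hk, pow_add, ← mul_assoc]
  exact Nat.mul_dvd_mul_left _ (ha ▸ index_dvd_card_of_mul_eq_univ hHT)

theorem not_hasPNilpotentSupplement (P : Sylow p G) {M H : Subgroup G} (hMP : M < P)
    (hHM : H ≤ M)
    (hM : ∀ K : Subgroup G, Nat.card K = (P : Subgroup G).index →
      ∀ u ∈ (P : Subgroup G), u ∈ Subgroup.normalizer (K : Set G) → u ∈ M) :
    ¬ HasPNilpotentSupplement p H := by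
  rintro ⟨T, ⟨W, hW, hcop, k, hk⟩, hHT⟩
  have hHP := hHM.trans hMP.le
  have hcard := card_complement_of_mul_eq_univ P (P.isPGroup'.to_le hHP) hHT hcop hk
  refine hMP.not_ge fun x hx ↦ ?_
  obtain ⟨h, hh, t, ht, rfl⟩ := (hHT ▸ Set.mem_univ x : x ∈ (H : Set G) * (T : Set G))
  have htP : t ∈ (P : Subgroup G) := (Subgroup.mul_mem_cancel_left _ (hHP hh)).1 hx
  have hnorm : T ≤ Subgroup.normalizer (W.map T.subtype : Set G) :=
    (Subgroup.normal_subgroupOf_iff_le_normalizer (Subgroup.map_subtype_le W)).1 (by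
      rwa [Subgroup.subgroupOf, Subgroup.comap_map_eq_self_of_injective T.subtype_injective])
  exact mul_mem (hHM hh) (hM _ hcard t htP (hnorm ht))

end Supplement

section Fusion

variable {p : ℕ} [hp : Fact p.Prime] {G : Type*} [Group G] [Finite G]

theorem focalSubgroupOf_sylow_inf_pResidual_eq_top (P : Sylow p G) :
    ((P : Subgroup G).subgroupOf (pResidual p G)).focalSubgroupOf = ⊤ := by
  let R : Sylow p (pResidual p G) :=
    (P.isPGroup'.comap_subtype (K := pResidual p G)).toSylow (sylow_not_dvd_relIndex_normal P _)
  refine eq_top_iff.2 fun x _ ↦ ?_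
  have htrivial := pResidual_hom_eq_one (R.isPGroup'.to_quotient _)
    (Subgroup.transferFocal (R : Subgroup (pResidual p G)))
  obtain ⟨y, hy⟩ := Subgroup.transferFocal_surjective R (QuotientGroup.mk x)
  exact (QuotientGroup.eq_one_iff _).1 (hy.symm.trans (DFunLike.congr_fun htrivial y))

theorem isPNilpotent_of_controls_fusion (P : Sylow p G)
    (h : ∀ x ∈ (P : Subgroup G) ⊓ pResidual p G, ∀ g ∈ pResidual p G, g * x * g⁻¹ ∈ P →
      ∃ u ∈ P, u * x * u⁻¹ = g * x * g⁻¹) :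
    IsPNilpotent p G := by
  have := P.isPGroup'.isNilpotent
  refine isPNilpotent_of_sylow_inf_pResidual_eq_bot P <|
    eq_bot_of_le_commutator inf_le_left fun x ⟨hxP, hxO⟩ ↦ ?_
  suffices hle : ((P : Subgroup G).subgroupOf (pResidual p G)).focalSubgroupOf ≤
      ⁅(P : Subgroup G) ⊓ pResidual p G, (P : Subgroup G)⁆.comap
        ((pResidual p G).subtype.comp (Subgroup.subtype _)) by
    rw [focalSubgroupOf_sylow_inf_pResidual_eq_top] at hle
    exact hle (Subgroup.mem_top ⟨⟨x, hxO⟩, hxP⟩)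
  rw [Subgroup.focalSubgroupOf_eq_closure, Subgroup.closure_le]
  rintro c ⟨y, hy, g, hc⟩
  have hcG : (c : G) = y * (g * (y : G)⁻¹ * (g : G)⁻¹) := by
    rw [hc, commutatorElement_def]
    simp only [Subgroup.coe_mul, InvMemClass.coe_inv, mul_assoc]
  have hgP : (g : G) * (y : G)⁻¹ * (g : G)⁻¹ ∈ P :=
    (Subgroup.mul_mem_cancel_left (P : Subgroup G) hy).1 (hcG ▸ c.2)
  have hyR : (y : G)⁻¹ ∈ (P : Subgroup G) ⊓ pResidual p G := inv_mem ⟨hy, y.2⟩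
  obtain ⟨u, hu, huy⟩ := h _ hyR g g.2 hgP
  have hcu : (c : G) = ⁅(y : G), u⁆ := by rw [hcG, ← huy, commutatorElement_def]; group
  refine Subgroup.mem_comap.2 (hcu ▸ ?_ : (c : G) ∈ _)
  exact Subgroup.commutator_mem_commutator ⟨hy, y.2⟩ hu

end Fusion

section Frobenius

theorem lt_inf_normalizer_of_isNilpotent {G : Type*} [Group G] {D P : Subgroup G}
    [Group.IsNilpotent P] (h : D < P) : D < P ⊓ Subgroup.normalizer (D : Set G) := by
  have hlt := Group.normalizerCondition_of_isNilpotent (G := P) (D.subgroupOf P)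
    (lt_top_iff_ne_top.2 (Subgroup.subgroupOf_eq_top.not.2 h.not_ge))
  rw [← Subgroup.subgroupOf_normalizer_eq h.le] at hlt
  obtain ⟨x, hx, hxD⟩ := SetLike.exists_of_lt hlt
  exact lt_of_le_not_ge (le_inf h.le Subgroup.le_normalizer) fun hle ↦ hxD (hle ⟨x.2, hx⟩)

/-- Every `p`-regular primary element normalising `D` centralises it; for a finite group this says
that `N_G(D) / C_G(D)` is a `p`-group. -/
def NormalizerActsAsPGroup {G : Type*} [Group G] (p : ℕ) (D : Subgroup G) : Prop :=
  ∀ g ∈ Subgroup.normalizer (D : Set G), IsPrimaryRegular p g →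
    g ∈ Subgroup.centralizer (D : Set G)

variable {p : ℕ} [hp : Fact p.Prime] {G : Type*} [Group G] [Finite G]

theorem NormalizerActsAsPGroup.exists_mul_eq {D : Subgroup G} (hD : NormalizerActsAsPGroup p D)
    (T : Sylow p (Subgroup.normalizer (D : Set G))) (x : Subgroup.normalizer (D : Set G)) :
    ∃ c ∈ (Subgroup.centralizer (D : Set G)).subgroupOf (Subgroup.normalizer (D : Set G)),
      ∃ t ∈ T, c * t = x := by
  have hle : pResidual p (Subgroup.normalizer (D : Set G)) ≤
      (Subgroup.centralizer (D : Set G)).subgroupOf _ :=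
    pResidual_le_iff.2 fun g hg ↦ hD g g.2 (hg.map (Subgroup.subtype _))
  have hx : x ∈ pResidual p (Subgroup.normalizer (D : Set G)) ⊔ T := by
    rw [sup_comm, sylow_sup_pResidual T]
    exact Subgroup.mem_top x
  obtain ⟨c, hc, t, ht, hct⟩ := Subgroup.mem_sup_of_normal_left.1 hx
  exact ⟨c, hle hc, t, ht, hct⟩

theorem NormalizerActsAsPGroup.exists_larger_inf {P S : Sylow p G}
    (hD : NormalizerActsAsPGroup p ((P : Subgroup G) ⊓ S)) (hne : P ≠ S) :
    ∃ U : Sylow p G, ∃ c ∈ Subgroup.centralizer ((P ⊓ S : Subgroup G) : Set G),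
      (P ⊓ S : Subgroup G) < (P : Subgroup G) ⊓ U ∧
        (P ⊓ S : Subgroup G) < ((c • U : Sylow p G) : Subgroup G) ⊓ S := by
  have := P.isPGroup'.isNilpotent
  have := S.isPGroup'.isNilpotent
  set D : Subgroup G := P ⊓ S
  have hDP : D < P := inf_le_left.lt_of_ne fun h ↦ hne (Sylow.ext (P.3 S.2 (inf_eq_left.1 h))).symm
  have hDS : D < S := inf_le_right.lt_of_ne fun h ↦ hne (Sylow.ext (S.3 P.2 (inf_eq_right.1 h)))
  let N := Subgroup.normalizer (D : Set G)
  obtain ⟨T, hT⟩ := (P.2.comap_subtype (K := N)).exists_le_sylow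
  obtain ⟨T', hT'⟩ := (S.2.comap_subtype (K := N)).exists_le_sylow
  obtain ⟨x, hx⟩ := MulAction.exists_smul_eq N T T'
  obtain ⟨c, hc, t, ht, rfl⟩ := hD.exists_mul_eq T x
  rw [mul_smul, Sylow.smul_eq_iff_mem_normalizer.2 (Subgroup.le_normalizer ht)] at hx
  obtain ⟨U, hU⟩ := (T.2.map N.subtype).exists_le_sylow
  refine ⟨U, c, hc, (lt_inf_normalizer_of_isNilpotent hDP).trans_le (le_inf inf_le_left ?_),
    (lt_inf_normalizer_of_isNilpotent hDS).trans_le (le_inf ?_ inf_le_left)⟩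
  · exact fun y hy ↦ hU ⟨⟨y, hy.2⟩, hT hy.1, rfl⟩
  · rintro y hy
    obtain ⟨z, hz, hzy⟩ : (⟨y, hy.2⟩ : N) ∈ c • T := hx ▸ hT' hy.1
    exact ⟨z, hU ⟨z, hz, rfl⟩, congrArg Subtype.val hzy⟩

theorem exists_mem_centralizer_smul_eq
    (h : ∀ D : Subgroup G, IsPGroup p D → NormalizerActsAsPGroup p D)
    (P S : Sylow p G) :
    ∃ c ∈ Subgroup.centralizer ((P ⊓ S : Subgroup G) : Set G), c • P = S := by
  induction hD : (P ⊓ S : Subgroup G) using WellFoundedGT.induction generalizing P S with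
  | ind D ih =>
    subst hD
    by_cases hne : P = S
    · exact ⟨1, one_mem _, by rw [one_smul, hne]⟩
    obtain ⟨U, c, hc, hPU, hUS⟩ := (h _ (P.2.to_le inf_le_left)).exists_larger_inf hne
    obtain ⟨a, ha, hPa⟩ := ih _ hPU P U rfl
    obtain ⟨b, hb, hbS⟩ := ih _ hUS (c • U) S rfl
    refine ⟨b * (c * a), mul_mem (Subgroup.centralizer_le hUS.le hb)
      (mul_mem hc (Subgroup.centralizer_le hPU.le ha)), ?_⟩
    rw [mul_smul, mul_smul, hPa, hbS]

theorem isPNilpotent_of_normalizerActsAsPGroup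
    (h : ∀ D : Subgroup G, IsPGroup p D → NormalizerActsAsPGroup p D) : IsPNilpotent p G := by
  obtain ⟨P⟩ : Nonempty (Sylow p G) := inferInstance
  refine isPNilpotent_of_controls_fusion P fun x ⟨hx, _⟩ g _ hgx ↦ ?_
  obtain ⟨c, hc, hcP⟩ := exists_mem_centralizer_smul_eq h P (g⁻¹ • P)
  have hgc : g * c ∈ Subgroup.normalizer (P : Set G) :=
    Sylow.smul_eq_iff_mem_normalizer.1 (by rw [mul_smul, hcP, smul_inv_smul])
  have hxg : x ∈ (g⁻¹ • P : Sylow p G) :=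
    ⟨g * x * g⁻¹, hgx, show g⁻¹ * (g * x * g⁻¹) * g⁻¹⁻¹ = x by group⟩
  have hcx : c * x * c⁻¹ = x := by
    rw [← Subgroup.mem_centralizer_iff.1 hc x ⟨hx, hxg⟩, mul_inv_cancel_right]
  obtain ⟨d, hd, t, ht, hdt⟩ := (h _ P.2).exists_mul_eq (P.subtype Subgroup.le_normalizer)
    ⟨g * c, hgc⟩
  have htP : (t : G) ∈ P := ht
  have hdt : (d : G) * t = g * c := congrArg Subtype.val hdt
  have htx : (t : G) * x * (t : G)⁻¹ ∈ P := mul_mem (mul_mem htP hx) (inv_mem htP)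
  refine ⟨t, htP, ?_⟩
  calc (t : G) * x * (t : G)⁻¹
      = d * (t * x * (t : G)⁻¹) * (d : G)⁻¹ := by
        rw [← Subgroup.mem_centralizer_iff.1 (show (d : G) ∈ _ from hd) _ htx, mul_inv_cancel_right]
    _ = d * t * x * (d * t : G)⁻¹ := by group
    _ = g * (c * x * c⁻¹) * g⁻¹ := by rw [hdt]; group
    _ = g * x * g⁻¹ := by rw [hcx]

end Frobenius

section CoprimeAction

theorem eq_of_pow_modEq_pow {p q f m : ℕ} (hp : 0 < p) (hpq : p.Coprime q) (hfm : f ≤ m)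
    (h : p ^ f ≡ p ^ m [MOD q]) (hm : ∀ i, 1 ≤ i → i ≤ m → ¬ q ∣ p ^ i - 1) : f = m := by
  by_contra hne
  have hcancel : 1 ≡ p ^ (m - f) [MOD q] := by
    refine Nat.ModEq.cancel_left_of_coprime (c := p ^ f) (hpq.pow_left f).symm ?_
    rwa [mul_one, ← pow_add, Nat.add_sub_cancel' hfm]
  exact hm (m - f) (by lia) (m.sub_le f) ((Nat.modEq_iff_dvd' (Nat.pow_pos hp)).1 hcancel)

theorem mulAut_eq_one_of_pow_prime_pow {p q k m : ℕ} (hp : p.Prime) (hq : q.Prime) (hqp : q ≠ p)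
    {D : Type*} [Group D] (hD : Nat.card D = p ^ m)
    (hm : ∀ i, 1 ≤ i → i ≤ m → ¬ q ∣ p ^ i - 1) {φ : MulAut D} (hφ : φ ^ q ^ k = 1) : φ = 1 := by
  classical
  have := Fact.mk hq
  have := Nat.finite_of_card_ne_zero (hD ▸ pow_ne_zero m hp.ne_zero)
  have := Fintype.ofFinite D
  let F : Subgroup D := φ.toMonoidHom.eqLocus (MonoidHom.id D)
  obtain ⟨f, hfm, hF⟩ := (Nat.dvd_prime_pow hp).1 (hD ▸ F.card_subgroup_dvd_card)
  have hcount : p ^ f ≡ p ^ m [MOD q] := by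
    have hperm : (MulAut.toPerm D φ) ^ q ^ k = 1 := by rw [← map_pow, hφ, map_one]
    have hfixed : ((MulAut.toPerm D φ).supportᶜ).card = Nat.card F := by
      refine (Nat.subtype_card _ fun d ↦ ?_).symm
      rw [Finset.mem_compl, Equiv.Perm.notMem_support]
      exact Iff.rfl
    rw [← hF, ← hD, ← hfixed, Nat.card_eq_fintype_card]
    exact Equiv.Perm.card_compl_support_modEq hperm
  have htop : F = ⊤ := Subgroup.eq_top_of_card_eq F <| by
    rw [hF, hD, eq_of_pow_modEq_pow hp.pos ((Nat.coprime_primes hp hq).2 hqp.symm) hfm hcount hm]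
  exact MulEquiv.ext fun d ↦ (htop ▸ Subgroup.mem_top d : d ∈ F)

theorem normalizerActsAsPGroup_of_coprime {p n m : ℕ} (hp : p.Prime) {G : Type*}
    [Group G] (hcop : (Nat.card G).Coprime (∏ i ∈ Finset.Icc 1 n, (p ^ i - 1)))
    {D : Subgroup G} (hD : Nat.card D = p ^ m) (hmn : m ≤ n) : NormalizerActsAsPGroup p D := by
  rintro g hg ⟨q, k, hq, hqp, hgq⟩
  by_cases hg1 : g = 1
  · exact hg1 ▸ one_mem _
  have hqG : q ∣ Nat.card G := by
    have := Fact.mk hq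
    obtain ⟨j, -, hj⟩ := (Nat.dvd_prime_pow hq).1 (orderOf_dvd_of_pow_eq_one hgq)
    have hj0 : j ≠ 0 := by rintro rfl; exact hg1 (orderOf_eq_one_iff.1 hj)
    exact (dvd_pow_self q hj0).trans (hj ▸ orderOf_dvd_natCard g)
  let φ : MulAut D := Subgroup.normalizerMonoidHom D ⟨g, hg⟩
  have hφ : φ = 1 := by
    refine mulAut_eq_one_of_pow_prime_pow hp hq hqp hD (k := k) (fun i hi him hdvd ↦ ?_) ?_
    · have hdvd_prod := Finset.dvd_prod_of_mem (fun i ↦ p ^ i - 1)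
        (Finset.mem_Icc.2 ⟨hi, him.trans hmn⟩)
      exact Nat.not_coprime_of_dvd_of_dvd hq.one_lt hqG (hdvd.trans hdvd_prod) hcop
    · rw [← map_pow, show (⟨g, hg⟩ : Subgroup.normalizer (D : Set G)) ^ q ^ k = 1 from
        Subtype.ext hgq, map_one]
  refine Subgroup.mem_centralizer_iff.2 fun d hd ↦ ?_
  exact (mul_inv_eq_iff_eq_mul.1 (congrArg Subtype.val (DFunLike.congr_fun hφ ⟨d, hd⟩))).symm

theorem isPNilpotent_of_card_sylow_le {p n : ℕ} [hp : Fact p.Prime] {G : Type*} [Group G] [Finite G]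
    (hcop : (Nat.card G).Coprime (∏ i ∈ Finset.Icc 1 n, (p ^ i - 1))) (P : Sylow p G)
    (hP : Nat.card P ≤ p ^ n) : IsPNilpotent p G := by
  refine isPNilpotent_of_normalizerActsAsPGroup fun D hD ↦ ?_
  obtain ⟨m, hm⟩ := IsPGroup.iff_card.1 hD
  refine normalizerActsAsPGroup_of_coprime hp.out hcop hm ?_
  obtain ⟨Q, hQ⟩ := hD.exists_le_sylow
  rw [← Nat.pow_le_pow_iff_right hp.out.one_lt, ← hm]
  exact (Subgroup.card_le_of_le hQ).trans ((Nat.card_congr (P.equiv Q).toEquiv).symm ▸ hP)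

end CoprimeAction

theorem map_comap_inf_eq_inf_map {G K : Type*} [Group G] [Group K] (f : G →* K) (A : Subgroup K)
    (N : Subgroup G) : (A.comap f ⊓ N).map f = A ⊓ N.map f :=
  SetLike.coe_injective (Set.image_preimage_inter f (N : Set G) (A : Set K))

section SPermutable

theorem isSylowIn_top_iff {p : ℕ} {G : Type*} [Group G] {P : Subgroup G} :
    IsSylowIn p P ⊤ ↔ IsPGroup p P ∧ ¬ p ∣ P.index := by
  rw [IsSylowIn, ← Subgroup.relIndex, Subgroup.relIndex_top_right]
  exact and_iff_right le_top

variable {p : ℕ} [hp : Fact p.Prime] {G K : Type*} [Group G] [Finite G] [Group K] {H : Subgroup G}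

theorem SPermutable.mul_sylow_comm (hH : SPermutable H) (Q : Sylow p G) :
    (H : Set G) * Q = Q * H :=
  hH p hp.out Q (isSylowIn_top_iff.2 ⟨Q.2, Q.not_dvd_index⟩)

theorem SPermutable.le_sylow (hH : SPermutable H) (hHp : IsPGroup p H) (Q : Sylow p G) :
    H ≤ Q := by
  obtain ⟨k, hk⟩ := IsPGroup.iff_card.1 hHp
  have hcop : (p ^ k).Coprime (Q : Subgroup G).index :=
    (hp.out.coprime_iff_not_dvd.2 Q.not_dvd_index).pow_left k
  have hone : (Q : Subgroup G).relIndex (H ⊔ Q) = 1 := Nat.eq_one_of_dvd_coprimes hcop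
    (hk ▸ relIndex_sup_dvd_card_of_mul_comm (hH.mul_sylow_comm Q))
    (Subgroup.relIndex_dvd_index_of_le le_sup_right)
  exact le_sup_left.trans (Subgroup.relIndex_eq_one.1 hone)

theorem SPermutable.le_normalCore_sylow (hH : SPermutable H) (hHp : IsPGroup p H)
    (P : Sylow p G) : H ≤ (P : Subgroup G).normalCore := fun h hh b ↦ by
  obtain ⟨z, hz, hzh⟩ := hH.le_sylow hHp (b⁻¹ • P) hh
  have hzh : b⁻¹ * z * b⁻¹⁻¹ = h := hzh
  rwa [← hzh, show b * (b⁻¹ * z * b⁻¹⁻¹) * b⁻¹ = z by group]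

theorem SPermutable.mem_normalizer_of_isPrimaryRegular (hH : SPermutable H) (hHp : IsPGroup p H)
    {g : G} (hg : IsPrimaryRegular p g) : g ∈ Subgroup.normalizer (H : Set G) := by
  obtain ⟨q, k, hq, hqp, hgq⟩ := hg
  have := Fact.mk hq
  obtain ⟨P⟩ : Nonempty (Sylow p G) := inferInstance
  obtain ⟨Q, hgQ⟩ : ∃ Q : Sylow q G, g ∈ Q := by
    have hpow : IsPGroup q (Subgroup.zpowers g) := .of_card_dvd_pow
      (n := k) (Nat.card_zpowers g ▸ orderOf_dvd_of_pow_eq_one hgq)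
    obtain ⟨Q, hQ⟩ := hpow.exists_le_sylow
    exact ⟨Q, hQ (Subgroup.mem_zpowers g)⟩
  have hcore := hH.le_normalCore_sylow hHp P
  refine Subgroup.mem_normalizer_fintype fun h hh ↦ ?_
  have hsup : g * h * g⁻¹ ∈ H ⊔ Q :=
    (Subgroup.mul_mem_cancel_right _ (inv_mem (le_sup_right (a := H) hgQ))).2
      (mul_mem (le_sup_right (a := H) hgQ) (le_sup_left (a := H) hh))
  rw [← SetLike.mem_coe, coe_sup_of_mul_comm (hH.mul_sylow_comm Q)] at hsup
  obtain ⟨a, ha, b, hb, hab⟩ := hsup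
  have hab : a * b = g * h * g⁻¹ := hab
  have hbP : b ∈ (P : Subgroup G).normalCore := (Subgroup.mul_mem_cancel_left _ (hcore ha)).1
    (hab ▸ (Subgroup.normalCore_normal _).conj_mem h (hcore hh) g)
  have hb1 : b = 1 := Subgroup.disjoint_def.1 (IsPGroup.disjoint_of_ne q p hqp Q P Q.2 P.2) hb
    (Subgroup.normalCore_le _ hbP)
  rw [← hab, hb1, mul_one]
  exact ha

theorem SPermutable.map (hH : SPermutable H) {f : G →* K} (hf : Function.Surjective f) :
    SPermutable (H.map f) := by
  have : Finite K := .of_surjective f hf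
  intro q hq Q hQ
  have := Fact.mk hq
  obtain ⟨hQq, hQi⟩ := isSylowIn_top_iff.1 hQ
  obtain ⟨S, hS⟩ := Sylow.mapSurjective_surjective hf q (hQq.toSylow hQi)
  have hSQ : (S : Subgroup G).map f = Q := congrArg Sylow.toSubgroup hS
  rw [← hSQ, Subgroup.coe_map, Subgroup.coe_map, ← Set.image_mul, ← Set.image_mul]
  exact congrArg (f '' ·) (hH.mul_sylow_comm S)

end SPermutable

section UHypercenter

variable {G K : Type*} [Group G] [Group K]

theorem IsChiefFactor.comap_inf {f : G →* K} (hf : Function.Surjective f) {A B : Subgroup K}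
    (h : IsChiefFactor A B) {N : Subgroup G} [N.Normal] (hA : A ≤ N.map f) :
    IsChiefFactor (A.comap f ⊓ N) (B.comap f ⊓ N) := by
  obtain ⟨hAn, hBn, hBA, hmin⟩ := h
  have hmapA : (A.comap f ⊓ N).map f = A :=
    (map_comap_inf_eq_inf_map f A N).trans (inf_eq_left.2 hA)
  have hmapB : (B.comap f ⊓ N).map f = B :=
    (map_comap_inf_eq_inf_map f B N).trans (inf_eq_left.2 (hBA.le.trans hA))
  have := hAn.comap f
  have := hBn.comap f
  refine ⟨inferInstance, inferInstance, lt_of_le_of_ne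
    (inf_le_inf_right _ (Subgroup.comap_mono hBA.le))
    fun heq ↦ hBA.ne (by rw [← hmapB, heq, hmapA]), fun L hL hBL hLA ↦ ?_⟩
  refine hmin (L.map f) (hL.map f hf) (lt_of_le_of_ne (hmapB ▸ Subgroup.map_mono hBL.le) ?_)
    (lt_of_le_of_ne (hmapA ▸ Subgroup.map_mono hLA.le) ?_)
  · intro heq
    exact hBL.not_ge (le_inf (Subgroup.map_le_iff_le_comap.1 heq.ge) (hLA.le.trans inf_le_right))
  · intro heq
    refine hLA.not_ge fun x hx ↦ ?_
    obtain ⟨y, hy, hyx⟩ := (heq ▸ hx.1 : f x ∈ L.map f)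
    have hyN : y ∈ N := (hLA.le hy).2
    have hker : y⁻¹ * x ∈ B.comap f ⊓ N := by
      refine Subgroup.mem_inf.2 ⟨?_, mul_mem (inv_mem hyN) hx.2⟩
      change f (y⁻¹ * x) ∈ B
      rw [map_mul, map_inv, hyx, inv_mul_cancel]
      exact one_mem B
    exact (Subgroup.mul_mem_cancel_left _ (inv_mem hy)).1 (hBL.le hker)

theorem map_uHypercenter_le {f : G →* K} (hf : Function.Surjective f) :
    (UHypercenter G).map f ≤ UHypercenter K := by
  refine Subgroup.map_le_iff_le_comap.2 (sSup_le fun N ⟨hN, hchief⟩ ↦ ?_)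
  refine Subgroup.map_le_iff_le_comap.1 (le_sSup ⟨hN.map f hf, fun A B hAB hA ↦ ?_⟩)
  have hmap : (A.comap f ⊓ N).map f = A :=
    (map_comap_inf_eq_inf_map f A N).trans (inf_eq_left.2 hA)
  have hrel : (B.comap f ⊓ N).relIndex (A.comap f ⊓ N) = B.relIndex A := by
    rw [← inf_eq_left.2 hAB.2.2.1.le, Subgroup.comap_inf, inf_assoc, Subgroup.inf_relIndex_right,
      Subgroup.relIndex_comap, hmap, Subgroup.inf_relIndex_right]
  exact hrel ▸ hchief _ _ (hAB.comap_inf hf hA) inf_le_right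

/-- `L` is a minimal normal subgroup of the ambient group. -/
def IsMinimalNormal (L : Subgroup G) : Prop :=
  Minimal (fun X : Subgroup G ↦ X.Normal ∧ X ≠ ⊥) L

theorem exists_isMinimalNormal_le [Finite G] {N : Subgroup G} [hN : N.Normal] (h : N ≠ ⊥) :
    ∃ L ≤ N, IsMinimalNormal L :=
  (Set.toFinite {X : Subgroup G | X.Normal ∧ X ≠ ⊥}).exists_le_minimal ⟨hN, h⟩

theorem IsMinimalNormal.le_of_inf_ne_bot {L : Subgroup G} (hL : IsMinimalNormal L) {X : Subgroup G}
    [X.Normal] (hX : X ⊓ L ≠ ⊥) : L ≤ X :=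
  have := hL.prop.1
  (hL.2 ⟨inferInstance, hX⟩ inf_le_right).trans inf_le_left

theorem IsMinimalNormal.isChiefFactor_bot {L : Subgroup G} (hL : IsMinimalNormal L) :
    IsChiefFactor L ⊥ :=
  ⟨hL.prop.1, inferInstance, bot_lt_iff_ne_bot.2 hL.prop.2,
    fun _ hX hX0 hXL ↦ hXL.not_ge (hL.2 ⟨hX, hX0.ne'⟩ hXL.le)⟩

theorem exists_isMinimalNormal_card_prime [Finite G] (h : UHypercenter G ≠ ⊥) :
    ∃ L : Subgroup G, IsMinimalNormal L ∧ (Nat.card L).Prime := by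
  obtain ⟨N, ⟨hN, hchief⟩, hN0⟩ : ∃ N ∈ {N : Subgroup G | N.Normal ∧
      ∀ A B : Subgroup G, IsChiefFactor A B → A ≤ N → (B.relIndex A).Prime}, N ≠ ⊥ := by
    by_contra! hbot
    exact h (sSup_eq_bot.2 hbot)
  obtain ⟨L, hLN, hL⟩ := exists_isMinimalNormal_le hN0
  exact ⟨L, hL, Subgroup.relIndex_bot_left L ▸ hchief L ⊥ hL.isChiefFactor_bot hLN⟩

theorem UsQuasinormal.exists_inf_le_uHypercenter {H : Subgroup G} (hH : UsQuasinormal H)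
    (hcore : H.normalCore = ⊥) :
    ∃ T : Subgroup G, T.Normal ∧ SPermutable (H ⊔ T) ∧ H ⊓ T ≤ UHypercenter G := by
  obtain ⟨T, hT, hperm, hmem⟩ := hH
  let φ : G ⧸ H.normalCore →* G :=
    QuotientGroup.lift H.normalCore (MonoidHom.id G) fun _ hy ↦ Subgroup.mem_bot.1 (hcore ▸ hy)
  have hφ : Function.Surjective φ := fun y ↦ ⟨(y : G ⧸ H.normalCore), rfl⟩
  exact ⟨T, hT, hperm, fun x hx ↦ map_uHypercenter_le hφ ⟨_, hmem x hx, rfl⟩⟩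

end UHypercenter

section ElementaryAbelian

variable {G : Type*} [Group G]

theorem IsMinimalNormal.eq_top_of_characteristic {L : Subgroup G} (hL : IsMinimalNormal L)
    (W : Subgroup L) [W.Characteristic] (hW : W ≠ ⊥) : W = ⊤ := by
  have := hL.prop.1
  have hmap : L ≤ W.map L.subtype := hL.2 ⟨ConjAct.normal_of_characteristic_of_normal,
    (Subgroup.map_eq_bot_iff_of_injective _ L.subtype_injective).not.2 hW⟩
    (Subgroup.map_subtype_le W)
  exact eq_top_iff.2 fun x _ ↦ by
    obtain ⟨y, hy, hyx⟩ := hmap x.2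
    exact Subtype.ext hyx ▸ hy

theorem IsMinimalNormal.pow_prime_eq_one {p : ℕ} [hp : Fact p.Prime] [Finite G]
    {L : Subgroup G} (hL : IsMinimalNormal L) (hLp : IsPGroup p L) {x : G} (hx : x ∈ L) :
    x ^ p = 1 := by
  have : Nontrivial L := (Subgroup.nontrivial_iff_ne_bot L).2 hL.prop.2
  have hcenter : Subgroup.center L = ⊤ := hL.eq_top_of_characteristic _
    ((Subgroup.nontrivial_iff_ne_bot _).1 hLp.center_nontrivial)
  let _ : CommGroup L := Group.commGroupOfCenterEqTop hcenter
  let Ω : Subgroup L := (powMonoidHom p : L →* L).ker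
  have hchar : Ω.Characteristic := Subgroup.characteristic_iff_le_comap.2 fun φ y hy ↦ by
    change φ y ^ p = 1
    rw [← map_pow, show y ^ p = 1 from hy, map_one]
  have hΩ : Ω ≠ ⊥ := by
    obtain ⟨k, hk, hcard⟩ := hLp.nontrivial_iff_card.1 inferInstance
    obtain ⟨z, hz⟩ := exists_prime_orderOf_dvd_card' p (hcard ▸ dvd_pow_self p hk.ne')
    have hzp : z ^ p = 1 := hz ▸ pow_orderOf_eq_one z
    exact Subgroup.ne_bot_iff_exists_ne_one.2 ⟨⟨z, hzp⟩, fun h ↦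
      hp.out.one_lt.ne' (hz.symm.trans (orderOf_eq_one_iff.2 (congrArg Subtype.val h)))⟩
  have hmem : (⟨x, hx⟩ : L) ∈ Ω := hL.eq_top_of_characteristic Ω hΩ ▸ Subgroup.mem_top _
  exact congrArg Subtype.val hmem

end ElementaryAbelian

section NMaximal

theorem isMaximalIn_of_prime_relIndex {G : Type*} [Group G] {M K : Subgroup G} (hMK : M ≤ K)
    (h : (M.relIndex K).Prime) : IsMaximalIn M K := by
  refine ⟨hMK.lt_of_ne fun heq ↦ h.ne_one (Subgroup.relIndex_eq_one.2 heq.ge), fun L hML hLK ↦ ?_⟩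
  have hne : M.relIndex L ≠ 1 := fun hone ↦ hML.not_ge (Subgroup.relIndex_eq_one.1 hone)
  rw [← Subgroup.relIndex_mul_relIndex M L K hML.le hLK, Nat.prime_mul_iff] at h
  exact hLK.antisymm (Subgroup.relIndex_eq_one.1 (h.resolve_right fun h ↦ hne h.2).2)

theorem IsMaximalIn.isNMaximalIn_succ {G : Type*} [Group G] {n : ℕ} {H M P : Subgroup G}
    (hMP : IsMaximalIn M P) (hHM : IsNMaximalIn n H M) : IsNMaximalIn (n + 1) H P := by
  obtain ⟨c, hc0, hcn, hc⟩ := hHM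
  refine ⟨Fin.cons P c, rfl, hcn, Fin.cases ?_ hc⟩
  change IsMaximalIn (c 0) P
  rwa [hc0]

theorem isNMaximalIn_of_relIndex_eq_pow {p n : ℕ} [hp : Fact p.Prime] {G : Type*} [Group G]
    [Finite G] {H P : Subgroup G} (hP : IsPGroup p P) (hHP : H ≤ P) (h : H.relIndex P = p ^ n) :
    IsNMaximalIn n H P := by
  induction n generalizing P with
  | zero =>
    have hPH : P = H := (Subgroup.relIndex_eq_one.1 (h.trans (pow_zero p))).antisymm hHP
    exact ⟨fun _ ↦ P, rfl, hPH, fun i ↦ i.elim0⟩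
  | succ n ih =>
    have hlt : H.subgroupOf P ≠ ⊤ := fun htop ↦
      (Nat.one_lt_pow n.succ_ne_zero hp.out.one_lt).ne' (h ▸ Subgroup.index_eq_one.2 htop)
    obtain ⟨M, hHM, hM⟩ := exists_ge_index_eq_prime_of_isPGroup hP hlt
    have hMP := Subgroup.map_subtype_le M
    have hMP' : (M.map P.subtype).relIndex P = p := by
      rw [Subgroup.relIndex, Subgroup.subgroupOf,
        Subgroup.comap_map_eq_self_of_injective P.subtype_injective, hM]
    have hHM' : H ≤ M.map P.subtype := fun x hx ↦ ⟨⟨x, hHP hx⟩, hHM hx, rfl⟩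
    have hHM_index : H.relIndex (M.map P.subtype) = p ^ n := by
      rw [← Subgroup.relIndex_mul_relIndex H _ P hHM' hMP, hMP', pow_succ] at h
      exact Nat.eq_of_mul_eq_mul_right hp.out.pos h
    exact (isMaximalIn_of_prime_relIndex hMP (hMP'.symm ▸ hp.out)).isNMaximalIn_succ
      (ih (hP.to_le hMP) hHM' hHM_index)

end NMaximal

section Quotients

variable {p : ℕ} {G K : Type*} [Group G] [Group K] {f : G →* K} {H : Subgroup G}

theorem IsPNilpotent.of_surjective [hp : Fact p.Prime] (hG : IsPNilpotent p G)
    (hf : Function.Surjective f) : IsPNilpotent p K := by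
  obtain ⟨N, hN, hcop, k, hk⟩ := hG
  obtain ⟨j, -, hj⟩ := (Nat.dvd_prime_pow hp.out).1 (hk ▸ N.index_map_dvd hf)
  exact ⟨N.map f, hN.map f hf, hcop.coprime_dvd_left (Subgroup.card_map_dvd N f), j, hj⟩

theorem HasPNilpotentSupplement.map [Fact p.Prime] (hH : HasPNilpotentSupplement p H)
    (hf : Function.Surjective f) : HasPNilpotentSupplement p (H.map f) := by
  obtain ⟨T, hT, hHT⟩ := hH
  refine ⟨T.map f, hT.of_surjective (f.subgroupMap_surjective T), ?_⟩
  rw [Subgroup.coe_map, Subgroup.coe_map, ← Set.image_mul, hHT, Set.image_univ_of_surjective hf]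

theorem map_inf_map_le_of_ker_le (hker : f.ker ≤ H) (T : Subgroup G) :
    H.map f ⊓ T.map f ≤ (H ⊓ T).map f := by
  rintro _ ⟨hx, t, ht, rfl⟩
  have htH : t ∈ (H.map f).comap f := hx
  rw [Subgroup.comap_map_eq_self hker] at htH
  exact ⟨t, ⟨htH, ht⟩, rfl⟩

theorem map_inf_map_le_of_coprime_card_ker [Fact p.Prime] [Finite G] (hH : IsPGroup p H)
    (hker : p.Coprime (Nat.card f.ker)) (T : Subgroup G) [T.Normal] :
    H.map f ⊓ T.map f ≤ (H ⊓ T).map f := by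
  rintro _ ⟨⟨a, ha, rfl⟩, t, ht, hta⟩
  obtain ⟨k, hk⟩ := IsPGroup.iff_card.1 hH
  have hdisj : Disjoint (H.map (QuotientGroup.mk' T)) (f.ker.map (QuotientGroup.mk' T)) := by
    refine Subgroup.disjoint_of_coprime_natCard (Nat.Coprime.coprime_dvd_left
      (Subgroup.card_map_dvd _ _) (Nat.Coprime.coprime_dvd_right (Subgroup.card_map_dvd _ _) ?_))
    exact hk ▸ hker.pow_left k
  have hat : a * t⁻¹ ∈ f.ker := by rw [MonoidHom.mem_ker, map_mul, map_inv, hta, mul_inv_cancel]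
  have haT : (a : G ⧸ T) = ((a * t⁻¹ : G) : G ⧸ T) := by
    rw [QuotientGroup.mk_mul, (QuotientGroup.eq_one_iff _).2 (inv_mem ht), mul_one]
  have ha1 : (a : G ⧸ T) = 1 := Subgroup.disjoint_def.1 hdisj ⟨a, ha, rfl⟩ ⟨_, hat, haT.symm⟩
  exact ⟨a, ⟨ha, (QuotientGroup.eq_one_iff a).1 ha1⟩, rfl⟩

theorem UsQuasinormal.map [Finite G] (hH : UsQuasinormal H) (hf : Function.Surjective f)
    (hinf : ∀ T : Subgroup G, T.Normal → H.map f ⊓ T.map f ≤ (H ⊓ T).map f) :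
    UsQuasinormal (H.map f) := by
  obtain ⟨T, hT, hperm, hmem⟩ := hH
  refine ⟨T.map f, hT.map f hf, Subgroup.map_sup H T f ▸ hperm.map hf, fun x hx ↦ ?_⟩
  obtain ⟨a, ha, rfl⟩ := hinf T hT hx
  have hcore : H.normalCore ≤ (H.map f).normalCore.comap f := by
    have := (Subgroup.normalCore_normal H).map f hf
    exact Subgroup.map_le_iff_le_comap.1
      (Subgroup.normal_le_normalCore.2 (Subgroup.map_mono H.normalCore_le))
  exact map_uHypercenter_le (QuotientGroup.map_surjective_of_surjective _ _ f
    ((QuotientGroup.mk'_surjective _).comp hf) hcore) ⟨_, hmem a ha, rfl⟩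

/-- The condition that every subgroup of index `k` in `P` has a `p`-nilpotent supplement or is
𝔘ₛ-quasinormal. For a `p`-group `P` and `k = p ^ n` these are the `n`-maximal subgroups of `P`;
prescribing the index rather than a chain makes the condition pass to quotients. -/
def SupplementedOrUsQuasinormalOfIndex (p k : ℕ) (P : Subgroup G) : Prop :=
  ∀ H ≤ P, H.relIndex P = k → HasPNilpotentSupplement p H ∨ UsQuasinormal H

theorem SupplementedOrUsQuasinormalOfIndex.map [Fact p.Prime] [Finite G] {k : ℕ} {P : Subgroup G}
    (h : SupplementedOrUsQuasinormalOfIndex p k P) (hP : IsPGroup p P)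
    (hf : Function.Surjective f) (hker : f.ker ≤ P ∨ p.Coprime (Nat.card f.ker)) :
    SupplementedOrUsQuasinormalOfIndex p k (P.map f) := by
  intro X hX hindex
  have hmap : (X.comap f ⊓ P).map f = X :=
    (map_comap_inf_eq_inf_map f X P).trans (inf_eq_left.2 hX)
  have hindex' : (X.comap f ⊓ P).relIndex P = k := by
    rw [Subgroup.inf_relIndex_right, Subgroup.relIndex_comap, hindex]
  rw [← hmap]
  refine (h _ inf_le_right hindex').imp (·.map hf) fun hUs ↦ hUs.map hf fun T hT ↦ ?_
  rcases hker with hker | hker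
  · exact map_inf_map_le_of_ker_le (le_inf (f.ker_le_comap X) hker) T
  · exact map_inf_map_le_of_coprime_card_ker (hP.to_le inf_le_right) hker T

variable [hp : Fact p.Prime] [Finite G]

theorem sylow_inf_pResidual_le_of_isPNilpotent_quotient (P : Sylow p G) {L : Subgroup G} [L.Normal]
    (h : IsPNilpotent p (G ⧸ L)) : (P : Subgroup G) ⊓ pResidual p G ≤ L := by
  obtain ⟨k, hk⟩ := IsPGroup.iff_card.1 (P.2.map (QuotientGroup.mk' L))
  have hdisj : Disjoint ((P : Subgroup G).map (QuotientGroup.mk' L)) (pResidual p (G ⧸ L)) :=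
    Subgroup.disjoint_of_coprime_natCard
      (hk ▸ (isPNilpotent_iff_coprime_card_pResidual.1 h).pow_left k)
  rw [← QuotientGroup.ker_mk' L, ← Subgroup.map_eq_bot_iff, eq_bot_iff]
  exact (Subgroup.map_inf_le _ _ _).trans
    ((inf_le_inf_left _ (pResidual_map_le _)).trans hdisj.le_bot)

theorem isPNilpotent_of_quotient {L : Subgroup G} [L.Normal] (hL : p.Coprime (Nat.card L))
    (h : IsPNilpotent p (G ⧸ L)) : IsPNilpotent p G := by
  obtain ⟨P⟩ : Nonempty (Sylow p G) := inferInstance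
  obtain ⟨k, hk⟩ := IsPGroup.iff_card.1 P.2
  have hdisj : Disjoint (P : Subgroup G) L :=
    Subgroup.disjoint_of_coprime_natCard (hk ▸ hL.pow_left k)
  exact isPNilpotent_of_sylow_inf_pResidual_eq_bot P (eq_bot_iff.2 ((le_inf inf_le_left
    (sylow_inf_pResidual_le_of_isPNilpotent_quotient P h)).trans hdisj.le_bot))

end Quotients

section MinimalCounterexample

theorem sPermutable_bot {G : Type*} [Group G] : SPermutable (⊥ : Subgroup G) := fun _ _ _ _ ↦ by
  rw [Subgroup.coe_bot, Set.singleton_one, one_mul, mul_one]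

variable {p n : ℕ} {G : Type*} [Group G] [Finite G] {H L M X : Subgroup G}

theorem card_le_relIndex_of_inf_eq_bot {P : Subgroup G} (hLP : L ≤ P) (h : M ⊓ L = ⊥) :
    Nat.card L ≤ M.relIndex P := by
  rw [← Subgroup.relIndex_bot_left, ← h, Subgroup.inf_relIndex_right]
  exact Subgroup.relIndex_le_of_le_right hLP Subgroup.index_ne_zero_of_finite

theorem UsQuasinormal.sPermutable (hH : UsQuasinormal H) (hcore : H.normalCore = ⊥)
    (hL : ∀ X : Subgroup G, X.Normal → X ≠ ⊥ → L ≤ X) (hLp : ¬ (Nat.card L).Prime)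
    (hHL : H ⊓ L ≠ ⊥) : SPermutable H := by
  obtain ⟨T, hT, hperm, hle⟩ := hH.exists_inf_le_uHypercenter hcore
  obtain rfl : T = ⊥ := by
    by_contra hT0
    have hU : UHypercenter G ≠ ⊥ := fun hU ↦
      hHL (le_bot_iff.1 ((inf_le_inf_left H (hL T hT hT0)).trans (hle.trans hU.le)))
    obtain ⟨X, hX, hXp⟩ := exists_isMinimalNormal_card_prime hU
    rcases (Nat.dvd_prime hXp).1 (Subgroup.card_dvd_of_le (hL X hX.prop.1 hX.prop.2)) with h | h
    · exact hHL (by rw [Subgroup.card_eq_one.1 h, inf_bot_eq])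
    · exact hLp (h ▸ hXp)
  rwa [sup_bot_eq] at hperm

variable [hp : Fact p.Prime] (P : Sylow p G)

theorem not_prime_card_of_isPGroup (hLp : IsPGroup p L) (hn : 1 ≤ n) (hLn : p ^ n < Nat.card L) :
    ¬ (Nat.card L).Prime := fun h ↦ by
  obtain ⟨j, hj⟩ := IsPGroup.iff_card.1 hLp
  have hj1 : j = 1 := Nat.Prime.eq_one_of_pow (hj ▸ h)
  rw [hj, Nat.pow_lt_pow_iff_right hp.out.one_lt] at hLn
  lia

theorem exists_le_relIndex_eq_pow {P : Subgroup G} (hP : IsPGroup p P) (hMP : M ≤ P)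
    (hM : M.relIndex P = p) (hn : 1 ≤ n) (hPn : p ^ n < Nat.card P) {a : G} (ha : a ∈ M)
    (hap : a ^ p = 1) : ∃ H ≤ M, a ∈ H ∧ H.relIndex P = p ^ n := by
  obtain ⟨m, hm⟩ := IsPGroup.iff_card.1 hP
  have hnm : n < m := (Nat.pow_lt_pow_iff_right hp.out.one_lt).1 (hm ▸ hPn)
  have hcard_mul (K : Subgroup G) (hK : K ≤ P) : Nat.card K * K.relIndex P = p ^ m := by
    simpa only [Subgroup.relIndex_bot_left, hm] using Subgroup.relIndex_mul_relIndex ⊥ K P bot_le hK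
  have hMcard : Nat.card M = p ^ (m - 1) := by
    refine Nat.eq_of_mul_eq_mul_right hp.out.pos ?_
    rw [pow_sub_one_mul (by lia), ← hcard_mul M hMP, hM]
  obtain ⟨i, hi, hcard⟩ := (Nat.dvd_prime_pow hp.out).1
    ((orderOf_dvd_of_pow_eq_one (x := (⟨a, ha⟩ : M)) (Subtype.ext hap)).trans (pow_one p).symm.dvd)
  obtain ⟨K, hK, haK⟩ := Sylow.exists_subgroup_card_pow_prime_le p (m := m - n)
    (hMcard ▸ pow_dvd_pow p (by lia)) (Subgroup.zpowers (⟨a, ha⟩ : M))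
    ((Nat.card_zpowers _).trans hcard) (by lia)
  have hKM := Subgroup.map_subtype_le K
  refine ⟨K.map M.subtype, hKM, ⟨⟨a, ha⟩, haK (Subgroup.mem_zpowers _), rfl⟩, ?_⟩
  refine Nat.eq_of_mul_eq_mul_left (Nat.pow_pos (n := m - n) hp.out.pos) ?_
  rw [← pow_add, Nat.sub_add_cancel hnm.le, ← hcard_mul _ (hKM.trans hMP),
    Subgroup.card_map_of_injective M.subtype_injective, hK]

theorem isPGroup_of_inf_eq_bot
    (hcore : ∀ N : Subgroup G, N.Normal → p.Coprime (Nat.card N) → N = ⊥)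
    (hL : (P : Subgroup G) ⊓ pResidual p G ≤ L) [X.Normal] (hX : X ⊓ L = ⊥) : IsPGroup p X := by
  have hXR : X ⊓ pResidual p G = ⊥ := by
    refine hcore _ inferInstance (coprime_card_of_sylow_inf_eq_bot P (le_bot_iff.1 ?_))
    exact (le_inf (inf_le_right.trans inf_le_left)
      ((inf_le_inf_left _ inf_le_right).trans hL)).trans hX.le
  have hinj : Function.Injective ((QuotientGroup.mk' (pResidual p G)).comp X.subtype) := by
    refine (injective_iff_map_eq_one _).2 fun x hx ↦ Subtype.ext ?_
    exact Subgroup.mem_bot.1 (hXR ▸ ⟨x.2, (QuotientGroup.eq_one_iff (x : G)).1 hx⟩)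
  exact isPGroup_quotient_pResidual.of_injective _ hinj

theorem isPNilpotent_of_normal_card_le [L.Normal]
    (hcop : (Nat.card G).Coprime (∏ i ∈ Finset.Icc 1 n, (p ^ i - 1)))
    (hL : (P : Subgroup G) ⊓ pResidual p G ≤ L) (hLp : IsPGroup p L) (hLn : Nat.card L ≤ p ^ n) :
    IsPNilpotent p G := by
  obtain ⟨m, hm⟩ := IsPGroup.iff_card.1 hLp
  have hmn : m ≤ n := (Nat.pow_le_pow_iff_right hp.out.one_lt).1 (hm ▸ hLn)
  have hcentral : pResidual p G ≤ Subgroup.centralizer (L : Set G) := pResidual_le_iff.2 fun g hg ↦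
    normalizerActsAsPGroup_of_coprime hp.out hcop hm hmn g
      (Subgroup.normalizer_eq_top (H := L) ▸ Subgroup.mem_top g) hg
  refine isPNilpotent_of_controls_fusion P fun x hx g hg _ ↦ ⟨1, one_mem _, ?_⟩
  rw [one_mul, inv_one, mul_one, eq_mul_inv_iff_mul_eq]
  exact Subgroup.mem_centralizer_iff.1 (hcentral hg) x (hL hx)

theorem normal_inf_of_sPermutable (hMP : M ≤ P)
    (hPM : (P : Subgroup G) ≤ Subgroup.normalizer (M : Set G)) [hL : L.Normal]
    (h : ∀ a ∈ M ⊓ L, ∃ H ≤ M, a ∈ H ∧ SPermutable H) : (M ⊓ L).Normal := by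
  refine Subgroup.normalizer_eq_top_iff.1 (top_le_iff.1 ?_)
  rw [← sylow_sup_pResidual P, sup_le_iff, pResidual_le_iff]
  refine ⟨fun g hg ↦ Subgroup.mem_normalizer_fintype fun a ha ↦ ?_,
    fun g hg ↦ Subgroup.mem_normalizer_fintype fun a ha ↦ ?_⟩
  · exact ⟨(Subgroup.mem_normalizer_iff.1 (hPM hg) a).1 ha.1, hL.conj_mem a ha.2 g⟩
  · obtain ⟨H, hHM, haH, hH⟩ := h a ha
    have hgH := hH.mem_normalizer_of_isPrimaryRegular (P.2.to_le (hHM.trans hMP)) hg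
    exact ⟨hHM ((Subgroup.mem_normalizer_iff.1 hgH a).1 haH), hL.conj_mem a ha.2 g⟩

theorem exists_maximal_usQuasinormal {k : ℕ} (hG : ¬ IsPNilpotent p G)
    (hyp : SupplementedOrUsQuasinormalOfIndex p k (P : Subgroup G)) :
    ∃ M ≤ (P : Subgroup G), M.relIndex P = p ∧ (P : Subgroup G) ≤ Subgroup.normalizer (M : Set G) ∧
      ¬ (P : Subgroup G) ⊓ pResidual p G ≤ M ∧
      ∀ H ≤ M, H.relIndex P = k → UsQuasinormal H := by
  obtain ⟨M, hMP, hindex, hnorm, hM, hfix⟩ := exists_maximal_of_not_isPNilpotent P hG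
  have hlt : M < P := hMP.lt_of_ne fun h ↦ hM (h ▸ inf_le_left)
  exact ⟨M, hMP, hindex, hnorm, hM, fun H hHM hH ↦ (hyp H (hHM.trans hMP) hH).resolve_left
    (not_hasPNilpotentSupplement P hlt hHM hfix)⟩

theorem IsMinimalNormal.le_of_sylow_inf_pResidual_le (hL : IsMinimalNormal L)
    (hG : ¬ IsPNilpotent p G)
    (hcore : ∀ N : Subgroup G, N.Normal → p.Coprime (Nat.card N) → N = ⊥)
    (hR : ∀ (N : Subgroup G) [N.Normal], IsPGroup p N → N ≠ ⊥ →
      (P : Subgroup G) ⊓ pResidual p G ≤ N)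
    (hLp : IsPGroup p L) [X.Normal] (hX : X ≠ ⊥) : L ≤ X := by
  have := hL.prop.1
  have hRL := hR L hLp hL.prop.2
  refine hL.le_of_inf_ne_bot fun hXL ↦ hG (isPNilpotent_of_sylow_inf_pResidual_eq_bot P ?_)
  have hXp := isPGroup_of_inf_eq_bot P hcore hRL hXL
  exact le_bot_iff.1 ((le_inf (hR X hXp hX) hRL).trans hXL.le)

theorem isPNilpotent_of_normal_isPGroup {N : Subgroup G} [N.Normal] (hN : N ≠ ⊥)
    (hNp : IsPGroup p N) (hn : 1 ≤ n)
    (hcop : (Nat.card G).Coprime (∏ i ∈ Finset.Icc 1 n, (p ^ i - 1)))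
    (hyp : SupplementedOrUsQuasinormalOfIndex p (p ^ n) (P : Subgroup G))
    (hcore : ∀ X : Subgroup G, X.Normal → p.Coprime (Nat.card X) → X = ⊥)
    (hquot : ∀ (X : Subgroup G) [X.Normal], IsPGroup p X → X ≠ ⊥ → IsPNilpotent p (G ⧸ X)) :
    IsPNilpotent p G := by
  by_contra hG
  have hPn : p ^ n < Nat.card P := not_le.1 fun h ↦ hG (isPNilpotent_of_card_sylow_le hcop P h)
  have hR (X : Subgroup G) [X.Normal] (hXp : IsPGroup p X) (hX : X ≠ ⊥) :
      (P : Subgroup G) ⊓ pResidual p G ≤ X :=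
    sylow_inf_pResidual_le_of_isPNilpotent_quotient P (hquot X hXp hX)
  obtain ⟨M, hMP, hindex, hnorm, hM, hUs⟩ := exists_maximal_usQuasinormal P hG hyp
  obtain ⟨L, hLN, hL⟩ := exists_isMinimalNormal_le hN
  have := hL.prop.1
  have hLp := hNp.to_le hLN
  have hRL := hR L hLp hL.prop.2
  have hLn : p ^ n < Nat.card L :=
    not_le.1 fun h ↦ hG (isPNilpotent_of_normal_card_le P hcop hRL hLp h)
  have hmono (X : Subgroup G) (_ : X.Normal) (hX : X ≠ ⊥) : L ≤ X :=
    hL.le_of_sylow_inf_pResidual_le P hG hcore hR hLp hX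
  have hLprime := not_prime_card_of_isPGroup hLp hn hLn
  have hnormal : (M ⊓ L).Normal := normal_inf_of_sPermutable P hMP hnorm fun a ha ↦ by
    obtain rfl | ha1 := eq_or_ne a 1
    · exact ⟨⊥, bot_le, one_mem _, sPermutable_bot⟩
    obtain ⟨H, hHM, haH, hH⟩ := exists_le_relIndex_eq_pow P.2 hMP hindex hn hPn ha.1
      (hL.pow_prime_eq_one hLp ha.2)
    refine ⟨H, hHM, haH, (hUs H hHM hH).sPermutable ?_ hmono hLprime fun hHL ↦ ha1 ?_⟩
    · by_contra hcoreH
      exact hM ((hR _ (P.2.to_le (H.normalCore_le.trans (hHM.trans hMP))) hcoreH).trans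
        (H.normalCore_le.trans hHM))
    · exact Subgroup.mem_bot.1 (hHL ▸ ⟨haH, ha.2⟩)
  have hML : M ⊓ L ≠ ⊥ := fun h ↦ ((Nat.le_self_pow (by lia) p).trans_lt hLn).not_ge
    (hindex ▸ card_le_relIndex_of_inf_eq_bot (hLp.le_sylow_of_normal P) h)
  exact hM (hRL.trans (hmono _ hnormal hML |>.trans inf_le_left))

theorem uHypercenter_eq_bot (hp_core : ∀ X : Subgroup G, X.Normal → IsPGroup p X → X = ⊥)
    (hcore : ∀ X : Subgroup G, X.Normal → p.Coprime (Nat.card X) → X = ⊥) :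
    UHypercenter G = ⊥ := by
  by_contra hU
  obtain ⟨L, hL, hLprime⟩ := exists_isMinimalNormal_card_prime hU
  refine hL.prop.2 ?_
  by_cases hLp : p = Nat.card L
  · exact hp_core L hL.prop.1 (.of_card (n := 1) (by rw [← hLp, pow_one]))
  · exact hcore L hL.prop.1 ((Nat.coprime_primes hp.out hLprime).2 hLp)

theorem UsQuasinormal.exists_normal_inf_eq_bot {H : Subgroup G} (hH : UsQuasinormal H)
    (hHP : H ≤ P) (hH0 : H ≠ ⊥)
    (hp_core : ∀ X : Subgroup G, X.Normal → IsPGroup p X → X = ⊥)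
    (hcore : ∀ X : Subgroup G, X.Normal → p.Coprime (Nat.card X) → X = ⊥) :
    ∃ T : Subgroup G, T.Normal ∧ T ≠ ⊥ ∧ H ⊓ T = ⊥ := by
  have hHp : IsPGroup p H := P.2.to_le hHP
  obtain ⟨T, hT, hperm, hle⟩ := hH.exists_inf_le_uHypercenter
    (hp_core _ inferInstance (hHp.to_le H.normalCore_le))
  refine ⟨T, hT, fun hT0 ↦ hH0 ?_, le_bot_iff.1 (hle.trans (uHypercenter_eq_bot hp_core hcore).le)⟩
  rw [hT0, sup_bot_eq] at hperm
  have hPcore := hp_core _ inferInstance (P.2.to_le (P : Subgroup G).normalCore_le)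
  exact le_bot_iff.1 ((hperm.le_normalCore_sylow hHp P).trans hPcore.le)

theorem normal_eq_bot_of_card_sylow_inf_le {T : Subgroup G} [T.Normal]
    (hcop : (Nat.card G).Coprime (∏ i ∈ Finset.Icc 1 n, (p ^ i - 1)))
    (hp_core : ∀ X : Subgroup G, X.Normal → IsPGroup p X → X = ⊥)
    (hcore : ∀ X : Subgroup G, X.Normal → p.Coprime (Nat.card X) → X = ⊥)
    (hT : Nat.card ((P : Subgroup G) ⊓ T : Subgroup G) ≤ p ^ n) : T = ⊥ := by
  let S : Sylow p T :=
    (P.2.comap_subtype (K := T)).toSylow (sylow_not_dvd_relIndex_normal P T)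
  have hS : Nat.card S = Nat.card ((P : Subgroup G) ⊓ T : Subgroup G) := by
    change Nat.card ((P : Subgroup G).subgroupOf T) = _
    rw [← Subgroup.inf_subgroupOf_right]
    exact Nat.card_congr (Subgroup.subgroupOfEquivOfLe inf_le_right).toEquiv
  have hTn : IsPNilpotent p T :=
    isPNilpotent_of_card_sylow_le (hcop.coprime_dvd_left T.card_subgroup_dvd_card) S
      (hS.trans_le hT)
  have hres : pResidual p T = ⊥ := by
    have hcard := isPNilpotent_iff_coprime_card_pResidual.1 hTn
    rw [← Subgroup.card_map_of_injective T.subtype_injective] at hcard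
    exact (Subgroup.map_eq_bot_iff_of_injective _ T.subtype_injective).1
      (hcore _ ConjAct.normal_of_characteristic_of_normal hcard)
  refine hp_core T inferInstance (isPGroup_quotient_pResidual.of_injective
    (QuotientGroup.mk' (pResidual p T)) ((MonoidHom.ker_eq_bot_iff _).1 ?_))
  rw [QuotientGroup.ker_mk', hres]

theorem isPNilpotent_of_forall_quotient (hn : 1 ≤ n)
    (hcop : (Nat.card G).Coprime (∏ i ∈ Finset.Icc 1 n, (p ^ i - 1)))
    (hyp : SupplementedOrUsQuasinormalOfIndex p (p ^ n) (P : Subgroup G))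
    (hquot : ∀ (X : Subgroup G) [X.Normal], X ≠ ⊥ → IsPGroup p X ∨ p.Coprime (Nat.card X) →
      IsPNilpotent p (G ⧸ X)) : IsPNilpotent p G := by
  by_contra hG
  have hcore (X : Subgroup G) (_ : X.Normal) (hX : p.Coprime (Nat.card X)) : X = ⊥ := by
    by_contra hX0
    exact hG (isPNilpotent_of_quotient hX (hquot X hX0 (.inr hX)))
  by_cases hp_core : ∀ X : Subgroup G, X.Normal → IsPGroup p X → X = ⊥
  · have hPn : p ^ n < Nat.card P := not_le.1 fun h ↦ hG (isPNilpotent_of_card_sylow_le hcop P h)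
    obtain ⟨M, hMP, hindex, -, -, hUs⟩ := exists_maximal_usQuasinormal P hG hyp
    obtain ⟨H, hHM, -, hH⟩ :=
      exists_le_relIndex_eq_pow P.2 hMP hindex hn hPn M.one_mem (one_pow p)
    have hH0 : H ≠ ⊥ := fun h ↦ hPn.ne' (by rw [← hH, h, Subgroup.relIndex_bot_left])
    obtain ⟨T, hT, hT0, hHT⟩ :=
      (hUs H hHM hH).exists_normal_inf_eq_bot P (hHM.trans hMP) hH0 hp_core hcore
    refine hT0 (normal_eq_bot_of_card_sylow_inf_le P hcop hp_core hcore ?_)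
    refine hH ▸ card_le_relIndex_of_inf_eq_bot inf_le_left ?_
    exact le_bot_iff.1 ((inf_le_inf_left H inf_le_right).trans hHT.le)
  · push Not at hp_core
    obtain ⟨N, _, hNp, hN⟩ := hp_core
    exact hG (isPNilpotent_of_normal_isPGroup P hN hNp hn hcop hyp hcore
      fun X _ hXp hX ↦ hquot X hX (.inl hXp))

end MinimalCounterexample

theorem isPNilpotent_of_supplementedOrUsQuasinormalOfIndex {p n : ℕ} [Fact p.Prime] (hn : 1 ≤ n)
    {G : Type*} [Group G] [Finite G] (P : Sylow p G)
    (hcop : (Nat.card G).Coprime (∏ i ∈ Finset.Icc 1 n, (p ^ i - 1)))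
    (hyp : SupplementedOrUsQuasinormalOfIndex p (p ^ n) (P : Subgroup G)) :
    IsPNilpotent p G := by
  induction hG : Nat.card G using Nat.strong_induction_on generalizing G with
  | _ _ ih =>
    subst hG
    refine isPNilpotent_of_forall_quotient P hn hcop hyp fun X _ hX0 hX ↦ ?_
    have hcard : Nat.card (G ⧸ X) < Nat.card G := by
      have : Nontrivial X := (Subgroup.nontrivial_iff_ne_bot X).2 hX0
      rw [Subgroup.card_eq_card_quotient_mul_card_subgroup X]
      exact lt_mul_of_one_lt_right Nat.card_pos Finite.one_lt_card
    refine ih _ hcard (P.mapSurjective (QuotientGroup.mk'_surjective X))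
      (hcop.coprime_dvd_left X.card_quotient_dvd_card)
      (hyp.map P.2 (QuotientGroup.mk'_surjective X) ?_) rfl
    rw [QuotientGroup.ker_mk']
    exact hX.imp_left fun hXp ↦ hXp.le_sylow_of_normal P

/-- If `gcd(|G|, (p-1)(p²-1)⋯(pⁿ-1)) = 1` for some `n ≥ 1` and `G` has
a Sylow `p`-subgroup `P` such that every `n`-maximal subgroup of `P` either has a
`p`-nilpotent supplement in `G` or is 𝔘ₛ-quasinormal in `G`, then `G` is `p`-nilpotent. -/
theorem stmt_5 {G : Type*} [Group G] [Finite G] (p n : ℕ) (hp : p.Prime)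
    (hpdvd : p ∣ Nat.card G) (hn : 1 ≤ n)
    (hcop : Nat.Coprime (Nat.card G) (∏ i ∈ Finset.Icc 1 n, (p ^ i - 1)))
    (P : Subgroup G) (hP : IsSylowIn p P ⊤)
    (hyp : ∀ H : Subgroup G, IsNMaximalIn n H P →
      HasPNilpotentSupplement p H ∨ UsQuasinormal H) :
    IsPNilpotent p G := by
  have := Fact.mk hp
  obtain ⟨hPp, hPi⟩ := isSylowIn_top_iff.1 hP
  exact isPNilpotent_of_supplementedOrUsQuasinormalOfIndex hn (hPp.toSylow hPi) hcop
    fun H hHP hH ↦ hyp H (isNMaximalIn_of_relIndex_eq_pow hPp hHP hH)
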